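/- arXiv:2512.04670 — 7 statements merged into one kernel-verified Lean document; each statement's English description precedes it below -/
import Mathlib

section
/- There exist infinitely many pairwise distinct functions w : Q → ℝ, each of which is smooth on Q, satisfies the heat equation ∂w/∂t = ∂²w/∂x² at every point of Q, and satisfies lim_{x→0⁺} w(x,t) = 0 for every t > 0 and lim_{t→0⁺} w(x,t) = 0 for every x > 0. -/
open MeasureTheory Filter Set

/-- The open quarter-plane `Q = {(x,t) : x > 0, t > 0}`. -/
def quarterPlane : Set (ℝ × ℝ) := {p | 0 < p.1 ∧ 0 < p.2}

/-- `w` is smooth on `Q`, satisfies the heat equation `∂w/∂t = ∂²w/∂x²` at every point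
of `Q`, and has vanishing boundary limit (as `x → 0⁺`) and initial limit (as `t → 0⁺`). -/
def IsHomogeneousHeatSol (w : ℝ → ℝ → ℝ) : Prop :=
  ContDiffOn ℝ (⊤ : ℕ∞) (fun p : ℝ × ℝ => w p.1 p.2) quarterPlane ∧
  (∀ x t : ℝ, 0 < x → 0 < t →
    deriv (fun s => w x s) t = iteratedDeriv 2 (fun y => w y t) x) ∧
  (∀ t : ℝ, 0 < t → Tendsto (fun x => w x t) (nhdsWithin 0 (Ioi 0)) (nhds 0)) ∧
  (∀ x : ℝ, 0 < x → Tendsto (fun t => w x t) (nhdsWithin 0 (Ioi 0)) (nhds 0))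


theorem heat_aux (c : ℝ) : IsHomogeneousHeatSol
    (fun x t => c * (x * (t ^ (-(3/2) : ℝ) * Real.exp (-x ^ 2 / (4 * t))))) := by
  refine ⟨?_, ?_, ?_, ?_⟩
  · intro p hp
    apply ContDiffAt.contDiffWithinAt
    have h2 : p.2 ≠ 0 := hp.2.ne'
    have h4 : 4 * p.2 ≠ 0 := by positivity
    apply ContDiffAt.mul contDiffAt_const
    apply ContDiffAt.mul contDiffAt_fst
    apply ContDiffAt.mul
    · exact contDiffAt_snd.rpow_const_of_ne h2
    · apply ContDiffAt.exp
      exact (contDiffAt_fst.pow 2).neg.div (contDiffAt_const.mul contDiffAt_snd) h4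
  · intro x t hx ht
    have hE : ∀ y, HasDerivAt (fun y : ℝ => Real.exp (-y ^ 2 / (4 * t)))
        (Real.exp (-y ^ 2 / (4 * t)) * (-(2 * y) / (4 * t))) y := by
      intro y
      have := (((hasDerivAt_pow 2 y).neg).div_const (4 * t)).exp
      simpa using this
    have h1 : ∀ y, HasDerivAt (fun y : ℝ => c * (y * (t ^ (-(3/2) : ℝ) * Real.exp (-y ^ 2 / (4 * t)))))
        (c * (t ^ (-(3/2) : ℝ) * (Real.exp (-y ^ 2 / (4 * t)) * (1 - y ^ 2 / (2 * t))))) y := by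
      intro y
      have := ((hasDerivAt_id' y).mul ((hE y).const_mul (t ^ (-(3/2) : ℝ)))).const_mul c
      refine this.congr_deriv ?_
      field_simp
      ring
    have h2 : HasDerivAt (fun y : ℝ => c * (t ^ (-(3/2) : ℝ) * (Real.exp (-y ^ 2 / (4 * t)) * (1 - y ^ 2 / (2 * t)))))
        (c * (t ^ (-(3/2) : ℝ) * (Real.exp (-x ^ 2 / (4 * t)) * (x ^ 3 / (4 * t ^ 2) - 3 * x / (2 * t))))) x := by
      have := (((hE x).mul (((hasDerivAt_pow 2 x).div_const (2 * t)).const_sub 1)).const_mul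
        (t ^ (-(3/2) : ℝ))).const_mul c
      refine this.congr_deriv ?_
      simp only [Nat.cast_ofNat, Nat.add_one_sub_one, pow_one]
      field_simp
      ring
    have h3 : HasDerivAt (fun s : ℝ => c * (x * (s ^ (-(3/2) : ℝ) * Real.exp (-x ^ 2 / (4 * s)))))
        (c * (t ^ (-(3/2) : ℝ) * (Real.exp (-x ^ 2 / (4 * t)) * (x ^ 3 / (4 * t ^ 2) - 3 * x / (2 * t))))) t := by
      have ha := Real.hasDerivAt_rpow_const (x := t) (p := (-(3/2) : ℝ)) (Or.inl ht.ne')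
      have hb := ((hasDerivAt_const t (-x ^ 2)).div ((hasDerivAt_id' t).const_mul 4)
        (by positivity : (4 * t) ≠ 0)).exp
      have := ((ha.mul hb).const_mul x).const_mul c
      refine this.congr_deriv ?_
      rw [Real.rpow_sub_one ht.ne']
      simp only [Pi.div_apply]
      field_simp
      ring
    rw [h3.deriv, iteratedDeriv_succ, iteratedDeriv_one,
      show deriv (fun y : ℝ => c * (y * (t ^ (-(3/2) : ℝ) * Real.exp (-y ^ 2 / (4 * t))))) = _ from
        funext fun y => (h1 y).deriv]
    exact h2.deriv.symm
  · intro t ht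
    have : Continuous (fun x : ℝ => c * (x * (t ^ (-(3/2) : ℝ) * Real.exp (-x ^ 2 / (4 * t))))) := by
      fun_prop
    have h := this.tendsto 0
    simp only [zero_mul, mul_zero] at h
    exact h.mono_left nhdsWithin_le_nhds
  · intro x hx
    have h := (tendsto_rpow_mul_exp_neg_mul_atTop_nhds_zero (3/2) (x ^ 2 / 4) (by positivity)).comp
      (tendsto_inv_nhdsGT_zero (𝕜 := ℝ))
    have h' := (h.const_mul x).const_mul c
    simp only [mul_zero] at h'
    refine h'.congr' ?_
    filter_upwards [self_mem_nhdsWithin] with t ht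
    have ht : 0 < t := ht
    simp only [Function.comp]
    rw [Real.inv_rpow ht.le, Real.rpow_neg ht.le]
    congr 4
    field_simp

/-- There are infinitely many pairwise distinct (as functions on `Q`) solutions of the
homogeneous Dirichlet IBVP for the heat equation on the quarter-plane. -/
theorem heat_infinitely_many_solutions :
    ∃ F : ℕ → ℝ → ℝ → ℝ,
      (∀ m n : ℕ, m ≠ n → ∃ x t : ℝ, 0 < x ∧ 0 < t ∧ F m x t ≠ F n x t) ∧
      ∀ n : ℕ, IsHomogeneousHeatSol (F n) := by
  refine ⟨fun n x t => (n : ℝ) * (x * (t ^ (-(3/2) : ℝ) * Real.exp (-x ^ 2 / (4 * t)))), ?_, ?_⟩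
  · intro m n hmn
    refine ⟨1, 1, one_pos, one_pos, ?_⟩
    intro h
    apply hmn
    have h0 : (1 : ℝ) * ((1 : ℝ) ^ (-(3/2) : ℝ) * Real.exp (-1 ^ 2 / (4 * 1))) ≠ 0 := by
      positivity
    exact_mod_cast mul_right_cancel₀ h0 h
  · intro n
    exact heat_aux n
end

section
/- For every integer n ≥ 1, the function u_n(x,t) = (x/(2√π)) · (d^{n−1}/ds^{n−1})[ s^{−3/2} · exp(−x²/(4s)) ] evaluated at s = t is smooth on the open quarter-plane Q, satisfies the heat equation ∂u_n/∂t = ∂²u_n/∂x² at every point of Q, and satisfies lim_{x→0⁺} u_n(x,t) = 0 for every t > 0 and lim_{t→0⁺} u_n(x,t) = 0 for every x > 0. -/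
open MeasureTheory Filter Set

/-- `u_n(x,t) = (x/(2√π)) · (d^{n−1}/ds^{n−1})[ s^{−3/2}·exp(−x²/(4s)) ]|_{s=t}`,
the `(n−1)`-st derivative being taken with respect to the time variable on `(0,∞)`. -/
noncomputable def heatCounterexampleSeq (n : ℕ) : ℝ → ℝ → ℝ := fun x t =>
  x / (2 * Real.sqrt Real.pi) *
    iteratedDerivWithin (n - 1)
      (fun s : ℝ => s ^ (-(3 : ℝ) / 2) * Real.exp (-(x ^ 2) / (4 * s))) (Ioi 0) t

open Polynomial in
/-- Laguerre-type polynomials. -/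
noncomputable def lagP : ℕ → Polynomial ℝ
  | 0 => 1
  | k + 1 => (X - C (3 / 2 + (k : ℝ))) * lagP k - X * derivative (lagP k)

open Polynomial in
theorem lagP_ode (k : ℕ) : X * derivative (derivative (lagP k))
    + (C (3 / 2) - X) * derivative (lagP k) + C (k : ℝ) * lagP k = 0 := by
  induction k with
  | zero => simp [lagP]
  | succ k ih =>
    have h1 : derivative (lagP (k + 1)) = C ((k : ℝ) + 1) * (lagP k - derivative (lagP k)) := by
      simp only [lagP, derivative_sub, derivative_mul, derivative_X, derivative_C, map_add,
        map_one]
      linear_combination -ih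
    rw [h1]
    have h2 : derivative (C ((k : ℝ) + 1) * (lagP k - derivative (lagP k))) =
        C ((k : ℝ) + 1) * (derivative (lagP k) - derivative (derivative (lagP k))) := by
      rw [derivative_C_mul, derivative_sub]
    rw [h2]
    simp only [lagP, Nat.cast_add, Nat.cast_one, map_add, map_one]
    linear_combination (-(C (k : ℝ) + 1)) * ih

theorem lagP_ode_eval (k : ℕ) (z : ℝ) : z * (lagP k).derivative.derivative.eval z
    + (3 / 2 - z) * (lagP k).derivative.eval z + k * (lagP k).eval z = 0 := by
  have := congrArg (Polynomial.eval z) (lagP_ode k)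
  simpa using this

noncomputable def lagF (k : ℕ) (x t : ℝ) : ℝ :=
  t ^ (-(3 : ℝ) / 2 - k) * ((lagP k).eval (x ^ 2 / (4 * t)) * Real.exp (-(x ^ 2 / (4 * t))))

theorem lagF_hasDerivAt (k : ℕ) (x t : ℝ) (ht : 0 < t) :
    HasDerivAt (fun s => lagF k x s) (lagF (k + 1) x t) t := by
  have hz : HasDerivAt (fun s : ℝ => x ^ 2 / (4 * s)) (-(x ^ 2 / (4 * t)) / t) t := by
    have h := ((hasDerivAt_id t).const_mul (4 : ℝ)).inv (by simpa using ht.ne')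
    have h := h.const_mul (x ^ 2)
    have h' : HasDerivAt (fun s : ℝ => x ^ 2 / (4 * s)) _ t := h
    refine h'.congr_deriv ?_
    simp only [id]
    field_simp
  have hr : HasDerivAt (fun s : ℝ => s ^ (-(3 : ℝ) / 2 - k))
      ((-(3 : ℝ) / 2 - k) * t ^ (-(3 : ℝ) / 2 - k - 1)) t :=
    Real.hasDerivAt_rpow_const (Or.inl ht.ne')
  have hp := ((lagP k).hasDerivAt (x ^ 2 / (4 * t))).comp t hz
  have he := (Real.hasDerivAt_exp (-(x ^ 2 / (4 * t)))).comp t hz.neg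
  have H := hr.mul (hp.mul he)
  refine H.congr_deriv ?_
  have e1 : t ^ (-(3 : ℝ) / 2 - k) = t ^ (-(3 : ℝ) / 2 - k - 1) * t := by
    rw [Real.rpow_sub_one ht.ne']; field_simp
  have e2 : (-(3 : ℝ) / 2 - ((k + 1 : ℕ) : ℝ)) = -(3 : ℝ) / 2 - k - 1 := by push_cast; ring
  simp only [lagF, e2, lagP, Polynomial.eval_sub, Polynomial.eval_mul, Polynomial.eval_X,
    Polynomial.eval_C, Function.comp]
  simp only [e1, Pi.neg_apply, Pi.mul_apply, Function.comp]
  generalize x ^ 2 / (4 * t) = z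
  field_simp
  ring

theorem lagF_iter (k : ℕ) (x t : ℝ) (ht : 0 < t) :
    iteratedDerivWithin k
      (fun s : ℝ => s ^ (-(3 : ℝ) / 2) * Real.exp (-(x ^ 2) / (4 * s))) (Ioi 0) t
      = lagF k x t := by
  induction k generalizing t with
  | zero => simp [lagF, lagP, neg_div]
  | succ k ih =>
    rw [iteratedDerivWithin_succ]
    rw [derivWithin_congr (s := Ioi 0) (fun s hs => ih s hs) (ih t ht)]
    exact (lagF_hasDerivAt k x t ht).hasDerivWithinAt.derivWithin
      (isOpen_Ioi.uniqueDiffWithinAt ht)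

theorem lagF_xx (k : ℕ) (t : ℝ) (ht : 0 < t) (x : ℝ) :
    iteratedDeriv 2 (fun y => y * lagF k y t) x = x * lagF (k + 1) x t := by
  have hz : ∀ x : ℝ, HasDerivAt (fun y : ℝ => y ^ 2 / (4 * t)) (x / (2 * t)) x := by
    intro x
    have h := (hasDerivAt_pow 2 x).div_const (4 * t)
    refine h.congr_deriv ?_
    simp; field_simp; ring
  have hE : ∀ (q : Polynomial ℝ) (x : ℝ), HasDerivAt
      (fun y : ℝ => q.eval (y ^ 2 / (4 * t)) * Real.exp (-(y ^ 2 / (4 * t))))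
      ((q.derivative - q).eval (x ^ 2 / (4 * t)) * Real.exp (-(x ^ 2 / (4 * t))) * (x / (2 * t)))
      x := by
    intro q x
    have hp := (q.hasDerivAt (x ^ 2 / (4 * t))).comp x (hz x)
    have he := (Real.hasDerivAt_exp (-(x ^ 2 / (4 * t)))).comp x (hz x).neg
    refine (hp.mul he).congr_deriv ?_
    simp only [Polynomial.eval_sub, Pi.neg_apply, Function.comp]
    ring
  set p := lagP k with hp
  set A := t ^ (-(3 : ℝ) / 2 - k) with hA
  set q : Polynomial ℝ := p + 2 * Polynomial.X * (p.derivative - p) with hq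
  have d1 : deriv (fun y => y * lagF k y t) = fun y =>
      A * (q.eval (y ^ 2 / (4 * t)) * Real.exp (-(y ^ 2 / (4 * t)))) := by
    funext y
    have H := (hasDerivAt_id y).mul ((hE p y).const_mul A)
    have H' := H.deriv
    refine Eq.trans ?_ (H'.trans ?_)
    · rfl
    · simp only [hq, Polynomial.eval_add, Polynomial.eval_mul, Polynomial.eval_sub,
        Polynomial.eval_X, Polynomial.eval_ofNat, id]
      field_simp
      ring
  rw [iteratedDeriv_succ, iteratedDeriv_one, d1, ((hE q x).const_mul A).deriv]
  have e1 : A = t ^ (-(3 : ℝ) / 2 - k - 1) * t := by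
    rw [Real.rpow_sub_one ht.ne', ← hA]; field_simp
  have e2 : (-(3 : ℝ) / 2 - ((k + 1 : ℕ) : ℝ)) = -(3 : ℝ) / 2 - k - 1 := by push_cast; ring
  have ode := lagP_ode_eval k (x ^ 2 / (4 * t))
  rw [← hp] at ode
  simp only [lagF, e2, lagP, e1, hq, ← hp, Polynomial.eval_sub, Polynomial.eval_mul,
    Polynomial.eval_X, Polynomial.eval_C, Polynomial.eval_add, Polynomial.derivative_add,
    Polynomial.derivative_mul, Polynomial.derivative_sub, Polynomial.derivative_X,
    Polynomial.eval_ofNat, Polynomial.derivative_ofNat, Polynomial.eval_one, Polynomial.eval_zero]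
  generalize x ^ 2 / (4 * t) = z at *
  generalize t ^ (-(3 : ℝ) / 2 - k - 1) = B
  have e3 : B * t * (x / (2 * t)) = B * x / 2 := by field_simp
  linear_combination (norm := skip) (B * x * Real.exp (-z)) * ode
  field_simp
  ring

theorem lagF_lim (k : ℕ) (x : ℝ) (hx : 0 < x) :
    Tendsto (fun t => lagF k x t) (nhdsWithin 0 (Ioi 0)) (nhds 0) := by
  set c := x ^ 2 / 4 with hc
  have hc0 : 0 < c := by positivity
  have hz : Tendsto (fun t : ℝ => c * t⁻¹) (nhdsWithin 0 (Ioi 0)) atTop :=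
    tendsto_inv_nhdsGT_zero.const_mul_atTop hc0
  have l1 := tendsto_rpow_mul_exp_neg_mul_atTop_nhds_zero (3 / 2 + (k : ℝ)) (1 / 2) (by norm_num)
  have l2 := (((lagP k).comp (Polynomial.C 2 * Polynomial.X)).tendsto_div_exp_atTop).comp
    (tendsto_id.const_mul_atTop (r := (1 / 2 : ℝ)) (by norm_num))
  have l3 := (((l1.mul l2).comp hz).const_mul (c ^ (-(3 : ℝ) / 2 - k)))
  simp only [mul_zero] at l3
  refine l3.congr' ?_
  filter_upwards [self_mem_nhdsWithin] with t ht
  have ht : 0 < t := ht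
  have e : x ^ 2 / (4 * t) = c * t⁻¹ := by rw [hc]; field_simp
  simp only [lagF, e, Function.comp, Polynomial.eval_comp, Polynomial.eval_mul,
    Polynomial.eval_C, Polynomial.eval_X, id]
  have e4 : t ^ (-(3 : ℝ) / 2 - k) = c ^ (-(3 : ℝ) / 2 - k) * (c * t⁻¹) ^ (3 / 2 + (k : ℝ)) := by
    rw [Real.mul_rpow hc0.le (by positivity), ← mul_assoc, ← Real.rpow_add hc0,
      Real.inv_rpow ht.le, ← Real.rpow_neg ht.le]
    ring_nf
    simp
  rw [e4]
  generalize c * t⁻¹ = z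
  have e5 : Real.exp (-z) = Real.exp (-(1 / 2) * z) * (Real.exp (1 / 2 * z))⁻¹ := by
    rw [← Real.exp_neg, ← Real.exp_add]; ring_nf
  have e6 : (2 : ℝ) * (1 / 2 * z) = z := by ring
  rw [e5, e6]
  ring

theorem lagF_contDiffOn (k : ℕ) :
    ContDiffOn ℝ (⊤ : ℕ∞) (fun p : ℝ × ℝ => lagF k p.1 p.2) {p | 0 < p.2} := by
  unfold lagF
  have h1 : ContDiffOn ℝ (⊤ : ℕ∞) (fun p : ℝ × ℝ => p.1) {p | 0 < p.2} := contDiff_fst.contDiffOn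
  have h2 : ContDiffOn ℝ (⊤ : ℕ∞) (fun p : ℝ × ℝ => p.2) {p | 0 < p.2} := contDiff_snd.contDiffOn
  have hz : ContDiffOn ℝ (⊤ : ℕ∞) (fun p : ℝ × ℝ => p.1 ^ 2 / (4 * p.2)) {p | 0 < p.2} :=
    (h1.pow 2).div (contDiffOn_const.mul h2) (fun p hp => by
      have : 0 < p.2 := hp
      positivity)
  refine (h2.rpow_const_of_ne (fun p hp => ne_of_gt hp)).mul (ContDiffOn.mul ?_ hz.neg.exp)
  have := ((lagP k).contDiff_aeval (𝕜 := ℝ) ((⊤ : ℕ∞) : WithTop ℕ∞)).comp_contDiffOn hz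
  simpa [Function.comp_def] using this

theorem heatSeq_eq (n : ℕ) (x t : ℝ) (ht : 0 < t) : heatCounterexampleSeq n x t =
    x / (2 * Real.sqrt Real.pi) * lagF (n - 1) x t := by
  rw [heatCounterexampleSeq, lagF_iter _ _ _ ht]

theorem heat_counterexample_sequence (n : ℕ) (hn : 1 ≤ n) :
    IsHomogeneousHeatSol (heatCounterexampleSeq n) := by
  refine ⟨?_, ?_, ?_, ?_⟩
  · have h : ContDiffOn ℝ (⊤ : ℕ∞) (fun p : ℝ × ℝ => p.1 / (2 * Real.sqrt Real.pi) *
        lagF (n - 1) p.1 p.2) quarterPlane :=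
      (contDiff_fst.contDiffOn.div_const _).mul
        ((lagF_contDiffOn (n - 1)).mono (fun p hp => hp.2))
    exact h.congr (fun p hp => heatSeq_eq n p.1 p.2 hp.2)
  · intro x t hx ht
    have e : (fun s => heatCounterexampleSeq n x s) =ᶠ[nhds t]
        fun s => x / (2 * Real.sqrt Real.pi) * lagF (n - 1) x s := by
      filter_upwards [lt_mem_nhds ht] with s hs using heatSeq_eq n x s hs
    rw [e.deriv_eq, ((lagF_hasDerivAt (n - 1) x t ht).const_mul _).deriv]
    have e' : (fun y => heatCounterexampleSeq n y t) =
        fun y => (2 * Real.sqrt Real.pi)⁻¹ * (y * lagF (n - 1) y t) := by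
      funext y
      rw [heatSeq_eq n y t ht]; ring
    rw [e', iteratedDeriv_const_mul_field, lagF_xx _ _ ht]
    ring
  · intro t ht
    have hc : Continuous (fun x : ℝ => x / (2 * Real.sqrt Real.pi) * lagF (n - 1) x t) := by
      have : Continuous (fun x : ℝ => lagF (n - 1) x t) := by
        have h := (lagF_contDiffOn (n - 1)).continuousOn.comp_continuous
          (f := fun x : ℝ => (x, t)) (by fun_prop) (fun _ => ht)
        exact h
      fun_prop
    have h := (hc.tendsto 0).mono_left (nhdsWithin_le_nhds (s := Ioi 0))
    simp only [zero_div, zero_mul] at h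
    exact h.congr (fun x => (heatSeq_eq n x t ht).symm)
  · intro x hx
    have h := (lagF_lim (n - 1) x hx).const_mul (x / (2 * Real.sqrt Real.pi))
    rw [mul_zero] at h
    refine h.congr' ?_
    filter_upwards [self_mem_nhdsWithin] with t ht using (heatSeq_eq n x t ht).symm
end

section
/- For every integer n ≥ 1, every x > 0 and every t > 0, the absolutely convergent complex integral −(i/π) ∫_{λ∈ℝ} (−λ²)^{n−1} · λ · exp(iλx − λ²t) dλ equals (x/(2√π)) · (d^{n−1}/ds^{n−1})[ s^{−3/2} · exp(−x²/(4s)) ] evaluated at s = t. -/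
open MeasureTheory Filter Set

lemma hcs_norm (m : ℕ) (x t l : ℝ) :
    ‖(-(l : ℂ) ^ 2) ^ m * (l : ℂ) *
        Complex.exp (Complex.I * (l : ℂ) * (x : ℂ) - (l : ℂ) ^ 2 * (t : ℂ))‖
      = ‖l ^ (2 * m + 1) * Real.exp (-t * l ^ 2)‖ := by
  have h : (Complex.I * (l : ℂ) * (x : ℂ) - (l : ℂ) ^ 2 * (t : ℂ)).re = -t * l ^ 2 := by
    rw [show (Complex.I * (l : ℂ) * (x : ℂ) - (l : ℂ) ^ 2 * (t : ℂ))
      = ((-t * l ^ 2 : ℝ) : ℂ) + ((l * x : ℝ) : ℂ) * Complex.I by push_cast; ring]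
    simp only [Complex.add_re, Complex.ofReal_re, Complex.re_ofReal_mul, Complex.I_re]
    ring
  rw [norm_mul, Complex.norm_exp, h, norm_mul, norm_mul, norm_pow, norm_neg, norm_pow,
    norm_pow, Complex.norm_real, Real.norm_of_nonneg (Real.exp_pos _).le]
  ring

lemma hcs_int_real (k : ℕ) (t : ℝ) (ht : 0 < t) :
    Integrable (fun l : ℝ => l ^ k * Real.exp (-t * l ^ 2)) := by
  have := integrable_rpow_mul_exp_neg_mul_sq ht (s := k)
    (by have : (0 : ℝ) ≤ k := k.cast_nonneg
        linarith)
  simpa only [Real.rpow_natCast] using this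

lemma hcs_int (m : ℕ) (x t : ℝ) (ht : 0 < t) :
    Integrable (fun l : ℝ =>
      (-(l : ℂ) ^ 2) ^ m * (l : ℂ) *
        Complex.exp (Complex.I * (l : ℂ) * (x : ℂ) - (l : ℂ) ^ 2 * (t : ℂ))) := by
  refine (hcs_int_real (2 * m + 1) t ht).mono (by fun_prop) ?_
  exact .of_forall fun l => (hcs_norm m x t l).le

lemma hcs_deriv (m : ℕ) (x t : ℝ) (ht : 0 < t) :
    HasDerivAt (fun s : ℝ => ∫ l : ℝ, (-(l : ℂ) ^ 2) ^ m * (l : ℂ) *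
        Complex.exp (Complex.I * (l : ℂ) * (x : ℂ) - (l : ℂ) ^ 2 * (s : ℂ)))
      (∫ l : ℝ, (-(l : ℂ) ^ 2) ^ (m + 1) * (l : ℂ) *
        Complex.exp (Complex.I * (l : ℂ) * (x : ℂ) - (l : ℂ) ^ 2 * (t : ℂ))) t := by
  refine (hasDerivAt_integral_of_dominated_loc_of_deriv_le
    (F := fun (s : ℝ) (l : ℝ) => (-(l : ℂ) ^ 2) ^ m * (l : ℂ) *
        Complex.exp (Complex.I * (l : ℂ) * (x : ℂ) - (l : ℂ) ^ 2 * (s : ℂ)))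
    (F' := fun (s : ℝ) (l : ℝ) => (-(l : ℂ) ^ 2) ^ (m + 1) * (l : ℂ) *
        Complex.exp (Complex.I * (l : ℂ) * (x : ℂ) - (l : ℂ) ^ 2 * (s : ℂ)))
    (bound := fun l : ℝ => ‖l ^ (2 * (m + 1) + 1) * Real.exp (-(t / 2) * l ^ 2)‖)
    (Ioi_mem_nhds (half_lt_self ht)) ?_ ?_ ?_ ?_ ?_ ?_).2
  · exact .of_forall fun s => by fun_prop
  · exact hcs_int m x t ht
  · exact (hcs_int (m + 1) x t ht).1
  · refine .of_forall fun l s hs => ?_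
    rw [hcs_norm, norm_mul, norm_mul]
    refine mul_le_mul_of_nonneg_left ?_ (norm_nonneg _)
    rw [Real.norm_of_nonneg (Real.exp_pos _).le, Real.norm_of_nonneg (Real.exp_pos _).le,
      Real.exp_le_exp]
    have : t / 2 < s := hs
    nlinarith [sq_nonneg l]
  · exact (hcs_int_real _ (t / 2) (by linarith)).norm
  · refine .of_forall fun l s hs => ?_
    have h1 : HasDerivAt (fun s : ℝ => Complex.I * (l : ℂ) * (x : ℂ) - (l : ℂ) ^ 2 * (s : ℂ))
        (-((l : ℂ) ^ 2 * 1)) s :=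
      ((Complex.ofRealCLM.hasDerivAt (x := s)).const_mul _).const_sub _
    convert! (h1.cexp.const_mul ((-(l : ℂ) ^ 2) ^ m * (l : ℂ))) using 1
    ring

lemma hcs_base (x t : ℝ) (ht : 0 < t) :
    -(Complex.I / (Real.pi : ℂ)) * ∫ l : ℝ, (-(l : ℂ) ^ 2) ^ 0 * (l : ℂ) *
        Complex.exp (Complex.I * (l : ℂ) * (x : ℂ) - (l : ℂ) ^ 2 * (t : ℂ))
      = ((x / (2 * Real.sqrt Real.pi) *
          (t ^ (-(3 : ℝ) / 2) * Real.exp (-(x ^ 2) / (4 * t))) : ℝ) : ℂ) := by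
  have hre : 0 < (t : ℂ).re := by simpa using ht
  have e1 : ∀ l : ℝ, Complex.exp (Complex.I * (x : ℂ) * (l : ℂ)) * Complex.exp (-(t : ℂ) * l ^ 2)
      = Complex.exp (Complex.I * (l : ℂ) * (x : ℂ) - (l : ℂ) ^ 2 * (t : ℂ)) := fun l => by
    rw [← Complex.exp_add]; congr 1; ring
  have hG := fourierIntegral_gaussian hre (x : ℂ)
  simp_rw [e1] at hG
  have hI0 : Integrable (fun l : ℝ =>
      Complex.exp (Complex.I * (l : ℂ) * (x : ℂ) - (l : ℂ) ^ 2 * (t : ℂ))) := by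
    have := integrable_cexp_quadratic hre (Complex.I * x) 0
    refine this.congr (.of_forall fun l => ?_)
    show Complex.exp _ = Complex.exp _
    congr 1; ring
  have hI1 := hcs_int 0 x t ht
  simp only [pow_zero, one_mul] at hI1 ⊢
  have hd : ∀ l : ℝ, HasDerivAt (fun l : ℝ =>
      Complex.exp (Complex.I * (l : ℂ) * (x : ℂ) - (l : ℂ) ^ 2 * (t : ℂ)))
      (Complex.I * x * Complex.exp (Complex.I * (l : ℂ) * (x : ℂ) - (l : ℂ) ^ 2 * (t : ℂ))
        - 2 * t * (l * Complex.exp (Complex.I * (l : ℂ) * (x : ℂ) - (l : ℂ) ^ 2 * (t : ℂ)))) l := by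
    intro l
    have h0 : HasDerivAt (fun l : ℝ => (l : ℂ)) 1 l := Complex.ofRealCLM.hasDerivAt
    have h1 := (((h0.const_mul Complex.I).mul_const (x : ℂ)).sub
      ((h0.pow 2).mul_const (t : ℂ))).cexp
    convert! h1 using 1
    simp only [Pi.sub_apply, Pi.pow_apply]
    push_cast
    ring
  have hz := integral_eq_zero_of_hasDerivAt_of_integrable hd
    ((hI0.const_mul _).sub (hI1.const_mul _)) hI0
  rw [integral_sub (hI0.const_mul _) (hI1.const_mul _), integral_const_mul, integral_const_mul,
    hG] at hz
  have htc : (t : ℂ) ≠ 0 := by exact_mod_cast ht.ne'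
  have hpi : (Real.pi : ℂ) ≠ 0 := by exact_mod_cast Real.pi_ne_zero
  have hs : ((Real.pi : ℂ) / t) ^ (1 / 2 : ℂ) = ((Real.sqrt (Real.pi / t) : ℝ) : ℂ) := by
    rw [Real.sqrt_eq_rpow, Complex.ofReal_cpow (by positivity)]
    push_cast; rfl
  have hr : t ^ (-(3 : ℝ) / 2) = 1 / (t * Real.sqrt t) := by
    rw [Real.sqrt_eq_rpow, neg_div, Real.rpow_neg ht.le, one_div,
      show (3 : ℝ) / 2 = 1 + 1 / 2 by norm_num, Real.rpow_add ht, Real.rpow_one]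
  have hJ := sub_eq_zero.1 hz
  rw [hs, Real.sqrt_div Real.pi_pos.le] at hJ
  have hst : ((Real.sqrt t : ℝ) : ℂ) ≠ 0 := by exact_mod_cast (Real.sqrt_pos.2 ht).ne'
  have hsp : ((Real.sqrt Real.pi : ℝ) : ℂ) ≠ 0 := by
    exact_mod_cast (Real.sqrt_pos.2 Real.pi_pos).ne'
  have hsq : ((Real.sqrt Real.pi : ℝ) : ℂ) ^ 2 = Real.pi := by
    exact_mod_cast Real.sq_sqrt Real.pi_pos.le
  generalize (∫ l : ℝ, (l : ℂ) *
    Complex.exp (Complex.I * (l : ℂ) * (x : ℂ) - (l : ℂ) ^ 2 * (t : ℂ))) = J at hJ ⊢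
  have hJ' : J = Complex.I * x * ((Real.sqrt Real.pi / Real.sqrt t : ℝ) *
      Complex.exp (-(x : ℂ) ^ 2 / (4 * t))) / (2 * t) := by
    rw [hJ]; field_simp
  rw [hJ', hr]
  push_cast
  rw [← hsq]
  field_simp
  rw [Complex.I_sq]
  ring

lemma hcs_main (m : ℕ) (x : ℝ) (hx : 0 < x) : ∀ t : ℝ, 0 < t →
    -(Complex.I / (Real.pi : ℂ)) * ∫ l : ℝ, (-(l : ℂ) ^ 2) ^ m * (l : ℂ) *
        Complex.exp (Complex.I * (l : ℂ) * (x : ℂ) - (l : ℂ) ^ 2 * (t : ℂ))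
      = ((x / (2 * Real.sqrt Real.pi) *
          iteratedDerivWithin m
            (fun s : ℝ => s ^ (-(3 : ℝ) / 2) * Real.exp (-(x ^ 2) / (4 * s)))
            (Ioi 0) t : ℝ) : ℂ) := by
  induction m with
  | zero =>
    intro t ht
    rw [iteratedDerivWithin_zero]
    exact hcs_base x t ht
  | succ m ih =>
    intro t ht
    have hc : x / (2 * Real.sqrt Real.pi) ≠ 0 := by
      have := Real.sqrt_pos.2 Real.pi_pos
      positivity
    have h1 := (hcs_deriv m x t ht).const_mul (-(Complex.I / (Real.pi : ℂ)))
    set J := -(Complex.I / (Real.pi : ℂ)) * ∫ l : ℝ, (-(l : ℂ) ^ 2) ^ (m + 1) * (l : ℂ) *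
        Complex.exp (Complex.I * (l : ℂ) * (x : ℂ) - (l : ℂ) ^ 2 * (t : ℂ)) with hJ
    set c := x / (2 * Real.sqrt Real.pi)
    set D := iteratedDerivWithin m
            (fun s : ℝ => s ^ (-(3 : ℝ) / 2) * Real.exp (-(x ^ 2) / (4 * s))) (Ioi 0) with hD
    have h2 : HasDerivAt (fun s : ℝ => ((c * D s : ℝ) : ℂ)) J t := by
      refine h1.congr_of_eventuallyEq ?_
      filter_upwards [Ioi_mem_nhds ht] with s hs
      exact (ih s hs).symm
    have h3 : HasDerivAt (fun s : ℝ => c * D s) J.re t := by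
      exact (Complex.reCLM.hasFDerivAt.comp_hasDerivAt t h2)
    have h4 : J = ((J.re : ℝ) : ℂ) := h2.unique h3.ofReal_comp
    have h5 : HasDerivAt D (c⁻¹ * J.re) t := by
      have := h3.const_mul c⁻¹
      simpa only [inv_mul_cancel_left₀ hc] using this
    rw [iteratedDerivWithin_succ, h5.hasDerivWithinAt.derivWithin (uniqueDiffOn_Ioi 0 t ht),
      mul_inv_cancel_left₀ hc]
    exact h4

/-- For integers `n ≥ 1`, `x > 0`, `t > 0`, the integrand
`λ ↦ (−λ²)^{n−1}·λ·exp(iλx − λ²t)` is absolutely integrable on `ℝ` and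
`−(i/π) ∫_ℝ (−λ²)^{n−1}·λ·exp(iλx − λ²t) dλ
  = (x/(2√π)) · (d^{n−1}/ds^{n−1})[ s^{−3/2}·exp(−x²/(4s)) ]|_{s=t}`,
the `(n−1)`-st derivative being taken with respect to the time variable on `(0,∞)`. -/
theorem heat_counterexample_sequence_integral (n : ℕ) (hn : 1 ≤ n) (x t : ℝ)
    (hx : 0 < x) (ht : 0 < t) :
    Integrable (fun l : ℝ =>
      (-(l : ℂ) ^ 2) ^ (n - 1) * (l : ℂ) *
        Complex.exp (Complex.I * (l : ℂ) * (x : ℂ) - (l : ℂ) ^ 2 * (t : ℂ))) ∧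
    -(Complex.I / (Real.pi : ℂ)) *
        ∫ l : ℝ, (-(l : ℂ) ^ 2) ^ (n - 1) * (l : ℂ) *
          Complex.exp (Complex.I * (l : ℂ) * (x : ℂ) - (l : ℂ) ^ 2 * (t : ℂ))
      = ((x / (2 * Real.sqrt Real.pi) *
          iteratedDerivWithin (n - 1)
            (fun s : ℝ => s ^ (-(3 : ℝ) / 2) * Real.exp (-(x ^ 2) / (4 * s)))
            (Ioi 0) t : ℝ) : ℂ) := by
  exact ⟨hcs_int (n - 1) x t ht, hcs_main (n - 1) x hx t ht⟩
end

section
/- The function v(x,t) = (i/π) · lim_{R→∞} ∫_{−R}^{R} exp(iλx) · (exp(−λ²t) − 1) · λ^{−1} dλ is well defined on the open quarter-plane Q (the symmetric limit exists), is smooth on Q, satisfies the heat equation ∂v/∂t = ∂²v/∂x² at every point of Q, and satisfies lim_{x→0⁺} v(x,t) = 1 for every t > 0 and lim_{t→0⁺} v(x,t) = 0 for every x > 0. -/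
open MeasureTheory Filter Set

lemma aux_exp_int (a T : ℝ) (ha : 0 < a) : ∫ s in (0:ℝ)..T, Real.exp (-(a * s)) ≤ 1 / a := by
  have h : ∫ s in (0:ℝ)..T, Real.exp (-(a * s)) = -(Real.exp (-(a*T)))/a - -(Real.exp (-(a*0)))/a := by
    apply intervalIntegral.integral_eq_sub_of_hasDerivAt (f := fun s => -(Real.exp (-(a*s)))/a)
    · intro s _
      have := ((((hasDerivAt_id s).const_mul a).neg.exp).neg).div_const a
      refine this.congr_deriv ?_
      simp; field_simp
    · exact (by fun_prop : Continuous fun s => Real.exp (-(a*s))).intervalIntegrable _ _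
  rw [h]
  have := Real.exp_pos (-(a*T))
  simp only [mul_zero, neg_zero, Real.exp_zero]
  rw [← sub_div]
  gcongr
  linarith

lemma aux_inner1 (l T : ℝ) : ∫ s in (0:ℝ)..T, Real.sin l * Real.exp (-(l * s))
    = Real.sinc l - Real.sinc l * Real.exp (-(T * l)) := by
  rcases eq_or_ne l 0 with rfl | hl
  · simp
  rw [Real.sinc_of_ne_zero hl]
  have h : ∫ s in (0:ℝ)..T, Real.sin l * Real.exp (-(l * s))
     = -(Real.sin l * Real.exp (-(l*T)))/l - -(Real.sin l * Real.exp (-(l*0)))/l := by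
    apply intervalIntegral.integral_eq_sub_of_hasDerivAt (f := fun s => -(Real.sin l * Real.exp (-(l*s)))/l)
    · intro s _
      have := ((((hasDerivAt_id s).const_mul l).neg.exp.const_mul (Real.sin l)).neg).div_const l
      refine this.congr_deriv ?_
      simp; field_simp
    · exact (by fun_prop : Continuous fun s => Real.sin l * Real.exp (-(l*s))).intervalIntegrable _ _
  rw [h]; simp; ring_nf

lemma aux_inner2 (s R : ℝ) : ∫ l in (0:ℝ)..R, Real.sin l * Real.exp (-(l * s))
    = 1 / (1 + s^2) - Real.exp (-(R*s)) * (Real.cos R + s * Real.sin R) / (1 + s^2) := by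
  have hp : (1 + s^2) ≠ 0 := by positivity
  have h : ∫ l in (0:ℝ)..R, Real.sin l * Real.exp (-(l * s))
     = -(Real.exp (-(R*s)) * (Real.cos R + s * Real.sin R)) / (1 + s^2)
       - -(Real.exp (-(0*s)) * (Real.cos 0 + s * Real.sin 0)) / (1 + s^2) := by
    apply intervalIntegral.integral_eq_sub_of_hasDerivAt
      (f := fun l => -(Real.exp (-(l*s)) * (Real.cos l + s * Real.sin l)) / (1 + s^2))
    · intro l _
      have := ((((hasDerivAt_id l).mul_const s).neg.exp.mul
        ((Real.hasDerivAt_cos l).add ((Real.hasDerivAt_sin l).const_mul s))).neg).div_const (1+s^2)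
      refine this.congr_deriv ?_
      simp; field_simp; ring
    · exact (by fun_prop : Continuous fun l => Real.sin l * Real.exp (-(l*s))).intervalIntegrable _ _
  rw [h]; simp; ring

lemma aux_swap (f : ℝ → ℝ → ℝ) (hf : Continuous f.uncurry) (a b c d : ℝ) :
    ∫ x in a..b, ∫ y in c..d, f x y = ∫ y in c..d, ∫ x in a..b, f x y := by
  apply intervalIntegral_intervalIntegral_swap
  refine IntegrableOn.mono_set ?_ (Set.prod_mono uIoc_subset_uIcc uIoc_subset_uIcc)
  exact hf.continuousOn.integrableOn_compact (isCompact_uIcc.prod isCompact_uIcc)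

lemma aux_Si_bound (R : ℝ) (hR : 0 < R) :
    |(∫ l in (0:ℝ)..R, Real.sinc l) - Real.arctan R| ≤ 3 / R := by
  have hc := Real.continuous_sinc
  have key : ∫ l in (0:ℝ)..R, ∫ s in (0:ℝ)..R, Real.sin l * Real.exp (-(l * s))
      = ∫ s in (0:ℝ)..R, ∫ l in (0:ℝ)..R, Real.sin l * Real.exp (-(l * s)) :=
    aux_swap (fun l s => Real.sin l * Real.exp (-(l * s))) (by unfold Function.uncurry; fun_prop) _ _ _ _
  simp_rw [aux_inner1, aux_inner2] at key
  have hcd : Continuous fun s : ℝ => Real.exp (-(R*s)) * (Real.cos R + s * Real.sin R) / (1 + s^2) :=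
    Continuous.div (by fun_prop) (by fun_prop) (fun s => by positivity)
  have hcd' : Continuous fun s : ℝ => 1 / (1 + s^2) :=
    Continuous.div (by fun_prop) (by fun_prop) (fun s => by positivity)
  rw [intervalIntegral.integral_sub (hc.intervalIntegrable _ _)
      ((by fun_prop : Continuous fun l => Real.sinc l * Real.exp (-(R*l))).intervalIntegrable _ _),
    intervalIntegral.integral_sub (hcd'.intervalIntegrable _ _) (hcd.intervalIntegrable _ _),
    integral_one_div_one_add_sq, Real.arctan_zero, sub_zero] at key
  have b1 : ‖∫ l in (0:ℝ)..R, Real.sinc l * Real.exp (-(R*l))‖ ≤ 1 / R := by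
    refine (intervalIntegral.norm_integral_le_of_norm_le hR.le (g := fun l => Real.exp (-(R*l))) ?_ ?_).trans
      (aux_exp_int R R hR)
    · refine Eventually.of_forall fun l _ => ?_
      rw [norm_mul, Real.norm_eq_abs, Real.norm_eq_abs, Real.abs_exp]
      exact mul_le_of_le_one_left (Real.exp_pos _).le (Real.abs_sinc_le_one l)
    · exact (by fun_prop : Continuous fun l => Real.exp (-(R*l))).intervalIntegrable _ _
  have b2 : ‖∫ s in (0:ℝ)..R, Real.exp (-(R*s)) * (Real.cos R + s * Real.sin R) / (1 + s^2)‖ ≤ 2 * (1 / R) := by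
    refine (intervalIntegral.norm_integral_le_of_norm_le hR.le (g := fun l => 2 * Real.exp (-(R*l))) ?_ ?_).trans ?_
    · refine Eventually.of_forall fun s hs => ?_
      rw [norm_div, norm_mul, Real.norm_eq_abs, Real.norm_eq_abs, Real.abs_exp, Real.norm_eq_abs,
        abs_of_pos (by positivity : 0 < 1 + s^2), div_le_iff₀ (by positivity)]
      have h1 : |Real.cos R + s * Real.sin R| ≤ 1 + s := by
        refine (abs_add_le _ _).trans (add_le_add (Real.abs_cos_le_one R) ?_)
        rw [abs_mul, abs_of_pos hs.1]
        exact mul_le_of_le_one_right hs.1.le (Real.abs_sin_le_one R)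
      have h2 : 1 + s ≤ 2 * (1 + s^2) := by nlinarith [sq_nonneg (s - 1), sq_nonneg s]
      have := mul_le_mul_of_nonneg_left (h1.trans h2) (Real.exp_pos (-(R*s))).le
      linarith
    · exact (by fun_prop : Continuous fun l => 2 * Real.exp (-(R*l))).intervalIntegrable _ _
    · rw [intervalIntegral.integral_const_mul]
      exact mul_le_mul_of_nonneg_left (aux_exp_int R R hR) (by norm_num)
  rw [Real.norm_eq_abs] at b1 b2
  have : 3 / R = 1/R + 2 * (1/R) := by ring
  rw [this]
  rw [abs_le] at *
  constructor <;> linarith [b1.1, b1.2, b2.1, b2.2]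

lemma aux_Si : Tendsto (fun R : ℝ => ∫ l in (0:ℝ)..R, Real.sinc l) atTop (nhds (Real.pi / 2)) := by
  have h1 : Tendsto Real.arctan atTop (nhds (Real.pi/2)) :=
    Real.tendsto_arctan_atTop.mono_right nhdsWithin_le_nhds
  have h2 : Tendsto (fun R : ℝ => (∫ l in (0:ℝ)..R, Real.sinc l) - Real.arctan R) atTop (nhds 0) := by
    refine squeeze_zero_norm' (a := fun R => 3 / R) ?_ (tendsto_const_nhds.div_atTop tendsto_id)
    filter_upwards [eventually_gt_atTop 0] with R hR using aux_Si_bound R hR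
  simpa using h2.add h1

lemma aux_cosint (t y : ℝ) (ht : 0 < t) :
    Tendsto (fun R : ℝ => ∫ l in (0:ℝ)..R, Real.cos (l * y) * Real.exp (-t * l^2)) atTop
      (nhds (Real.sqrt (Real.pi / t) / 2 * Real.exp (-y^2/(4*t)))) := by
  have hg : Integrable (fun l : ℝ => Real.exp (-t * l^2)) := integrable_exp_neg_mul_sq ht
  have hi : Integrable (fun l : ℝ => Real.cos (l * y) * Real.exp (-t * l^2)) := by
    refine hg.mono' (by fun_prop) (Eventually.of_forall fun l => ?_)
    rw [norm_mul, Real.norm_eq_abs, Real.norm_eq_abs, Real.abs_exp]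
    exact mul_le_of_le_one_left (Real.exp_pos _).le (Real.abs_cos_le_one _)
  have hF := fourierIntegral_gaussian (b := (t:ℂ)) (by simpa using ht) (y : ℂ)
  have hint : Integrable (fun x : ℝ => Complex.exp (Complex.I * y * x) * Complex.exp (-(t:ℂ) * x ^ 2)) := by
    have := integrable_cexp_quadratic (b := (t:ℂ)) (by simpa using ht) (Complex.I * y) 0
    refine this.congr (Eventually.of_forall fun x => ?_)
    simp only [← Complex.exp_add]; congr 1; ring
  have hre := congrArg Complex.re hF
  have e1 : (∫ x : ℝ, Complex.exp (Complex.I * y * x) * Complex.exp (-(t:ℂ) * x ^ 2)).re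
      = ∫ l : ℝ, Real.cos (l * y) * Real.exp (-t * l^2) := by
    have := integral_re hint
    simp only [RCLike.re_to_complex] at this
    rw [← this]
    congr 1; ext l
    have h1 : Complex.I * y * l = ((l * y : ℝ) : ℂ) * Complex.I := by push_cast; ring
    have h2 : -(t:ℂ) * l^2 = ((-t * l^2 : ℝ) : ℂ) := by push_cast; ring
    rw [h1, h2, ← Complex.ofReal_exp, Complex.re_mul_ofReal, Complex.exp_ofReal_mul_I_re]
  have e2 : ((Real.pi / t : ℂ) ^ (1 / 2 : ℂ) * Complex.exp (-y ^ 2 / (4 * t))).re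
      = Real.sqrt (Real.pi / t) * Real.exp (-y^2/(4*t)) := by
    have h1 : (Real.pi / t : ℂ) ^ (1 / 2 : ℂ) = ((Real.sqrt (Real.pi / t) : ℝ) : ℂ) := by
      rw [Real.sqrt_eq_rpow, Complex.ofReal_cpow (by positivity)]; push_cast; rfl
    have h2 : (-y ^ 2 / (4 * t) : ℂ) = ((-y^2/(4*t) : ℝ) : ℂ) := by push_cast; ring
    rw [h1, h2, ← Complex.ofReal_exp, ← Complex.ofReal_mul, Complex.ofReal_re]
  rw [e1, e2] at hre
  have habs := integral_comp_abs (f := fun l : ℝ => Real.cos (l * y) * Real.exp (-t * l^2))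
  have e3 : ∀ l : ℝ, Real.cos (|l| * y) * Real.exp (-t * |l|^2) = Real.cos (l * y) * Real.exp (-t * l^2) := by
    intro l
    rw [sq_abs]
    rcases abs_choice l with h | h <;> rw [h]
    rw [neg_mul, Real.cos_neg]
  simp only [e3] at habs
  rw [hre] at habs
  have := intervalIntegral_tendsto_integral_Ioi (0:ℝ) hi.integrableOn tendsto_id
  have e4 : Real.sqrt (Real.pi / t) / 2 * Real.exp (-y^2/(4*t))
      = ∫ x in Ioi (0:ℝ), Real.cos (x * y) * Real.exp (-t * x^2) := by linarith
  rw [e4]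
  exact this

lemma aux_cos_prim (l x : ℝ) (hx : 0 < x) : ∫ y in (0:ℝ)..x, Real.cos (l * y) = x * Real.sinc (l * x) := by
  rcases eq_or_ne l 0 with rfl | hl
  · simp
  rw [Real.sinc_of_ne_zero (by positivity), intervalIntegral.integral_comp_mul_left _ hl, integral_cos]
  simp
  field_simp

noncomputable def auxE (z : ℝ) : ℝ := ∫ s in (0:ℝ)..z, Real.exp (-s^2)

lemma auxE_hasDerivAt (z : ℝ) : HasDerivAt auxE (Real.exp (-z^2)) z := by
  have hc : Continuous fun s : ℝ => Real.exp (-s^2) := by fun_prop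
  exact (hc.integral_hasStrictDerivAt 0 z).hasDerivAt

lemma auxE_contDiff : ContDiff ℝ (⊤ : ℕ∞) auxE := by
  rw [contDiff_infty_iff_deriv]
  refine ⟨fun z => (auxE_hasDerivAt z).differentiableAt, ?_⟩
  have : deriv auxE = fun z => Real.exp (-z^2) := funext fun z => (auxE_hasDerivAt z).deriv
  rw [this]
  fun_prop

lemma auxE_tendsto : Tendsto auxE atTop (nhds (Real.sqrt Real.pi / 2)) := by
  have hg : Integrable (fun l : ℝ => Real.exp (-1 * l^2)) := integrable_exp_neg_mul_sq one_pos
  have := intervalIntegral_tendsto_integral_Ioi (0:ℝ) hg.integrableOn tendsto_id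
  rw [integral_gaussian_Ioi] at this
  have h2 : auxE = fun i => ∫ x in (0:ℝ)..i, Real.exp (-x^2) := rfl
  rw [h2]
  simpa using this

lemma aux_gauss (x t : ℝ) (hx : 0 < x) (ht : 0 < t) :
    Tendsto (fun R : ℝ => ∫ l in (0:ℝ)..R, x * Real.sinc (l * x) * Real.exp (-t * l^2)) atTop
      (nhds (Real.sqrt Real.pi * auxE (x / (2 * Real.sqrt t)))) := by
  have h1 : ∀ R : ℝ, ∫ l in (0:ℝ)..R, x * Real.sinc (l * x) * Real.exp (-t * l^2)
      = ∫ y in (0:ℝ)..x, ∫ l in (0:ℝ)..R, Real.cos (l * y) * Real.exp (-t * l^2) := by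
    intro R
    rw [← aux_swap (fun l y => Real.cos (l * y) * Real.exp (-t * l^2))
      (by unfold Function.uncurry; fun_prop)]
    refine intervalIntegral.integral_congr fun l _ => ?_
    rw [intervalIntegral.integral_mul_const, aux_cos_prim l x hx]
  simp_rw [h1]
  have hs : 0 < Real.sqrt t := Real.sqrt_pos.2 ht
  have hlim : Real.sqrt Real.pi * auxE (x / (2 * Real.sqrt t))
      = ∫ y in (0:ℝ)..x, Real.sqrt (Real.pi / t) / 2 * Real.exp (-y^2/(4*t)) := by
    have : ∀ y : ℝ, Real.exp (-y^2/(4*t)) = (fun s => Real.exp (-s^2)) ((2 * Real.sqrt t)⁻¹ * y) := by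
      intro y
      simp only
      congr 1
      rw [mul_pow, inv_pow, mul_pow, Real.sq_sqrt ht.le]
      field_simp; norm_num
    simp_rw [this]
    rw [intervalIntegral.integral_const_mul, intervalIntegral.integral_comp_mul_left (fun s => Real.exp (-s^2)) (by positivity), auxE,
      Real.sqrt_div Real.pi_pos.le]
    simp only [mul_zero, inv_inv, smul_eq_mul]
    rw [show (2 * Real.sqrt t)⁻¹ * x = x / (2 * Real.sqrt t) by ring]
    field_simp
  rw [hlim]
  have hg : Integrable (fun l : ℝ => Real.exp (-t * l^2)) := integrable_exp_neg_mul_sq ht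
  refine intervalIntegral.tendsto_integral_filter_of_dominated_convergence
    (fun _ => ∫ l : ℝ, Real.exp (-t * l^2)) ?_ ?_ ?_ ?_
  · refine Eventually.of_forall fun R => Continuous.aestronglyMeasurable ?_
    exact intervalIntegral.continuous_parametric_intervalIntegral_of_continuous'
      (f := fun y l => Real.cos (l * y) * Real.exp (-t * l^2)) (by unfold Function.uncurry; fun_prop) _ _
  · filter_upwards [eventually_ge_atTop 0] with R hR
    refine Eventually.of_forall fun y _ => ?_
    refine (intervalIntegral.norm_integral_le_of_norm_le hR (g := fun l => Real.exp (-t * l^2)) ?_ ?_).trans ?_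
    · refine Eventually.of_forall fun l _ => ?_
      rw [norm_mul, Real.norm_eq_abs, Real.norm_eq_abs, Real.abs_exp]
      exact mul_le_of_le_one_left (Real.exp_pos _).le (Real.abs_cos_le_one _)
    · exact hg.intervalIntegrable
    · rw [intervalIntegral.integral_of_le hR]
      exact setIntegral_le_integral hg (Eventually.of_forall fun l => (Real.exp_pos _).le)
  · exact intervalIntegrable_const
  · exact Eventually.of_forall fun y _ => aux_cosint t y ht

noncomputable def auxV (x t : ℝ) : ℝ := 1 - 2 / Real.sqrt Real.pi * auxE (x / (2 * Real.sqrt t))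

lemma aux_real_lim (x t : ℝ) (hx : 0 < x) (ht : 0 < t) :
    Tendsto (fun R : ℝ => ∫ l in (0:ℝ)..R, (x * Real.sinc (l * x) * Real.exp (-t * l^2) - x * Real.sinc (l * x)))
      atTop (nhds (-(Real.pi / 2) * auxV x t)) := by
  have hc := Real.continuous_sinc
  have h1 : ∀ R : ℝ, ∫ l in (0:ℝ)..R, (x * Real.sinc (l * x) * Real.exp (-t * l^2) - x * Real.sinc (l * x))
      = (∫ l in (0:ℝ)..R, x * Real.sinc (l * x) * Real.exp (-t * l^2)) - ∫ l in (0:ℝ)..R * x, Real.sinc l := by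
    intro R
    rw [intervalIntegral.integral_sub
      ((by fun_prop : Continuous fun l => x * Real.sinc (l * x) * Real.exp (-t * l^2)).intervalIntegrable _ _)
      ((by fun_prop : Continuous fun l => x * Real.sinc (l * x)).intervalIntegrable _ _)]
    congr 1
    rw [intervalIntegral.integral_const_mul, intervalIntegral.integral_comp_mul_right _ hx.ne']
    simp
    field_simp
  simp_rw [h1]
  have h2 := (aux_gauss x t hx ht).sub (aux_Si.comp (tendsto_id.atTop_mul_const hx))
  have e : Real.sqrt Real.pi * auxE (x / (2 * Real.sqrt t)) - Real.pi / 2 = -(Real.pi / 2) * auxV x t := by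
    have hp : Real.sqrt Real.pi * Real.sqrt Real.pi = Real.pi := Real.mul_self_sqrt Real.pi_pos.le
    have : 0 < Real.sqrt Real.pi := Real.sqrt_pos.2 Real.pi_pos
    unfold auxV
    generalize auxE (x / (2 * Real.sqrt t)) = e
    have h3 : Real.pi / Real.sqrt Real.pi = Real.sqrt Real.pi := by
      rw [div_eq_iff this.ne', hp]
    linear_combination (-e) * h3
  rw [e] at h2
  exact h2

lemma aux_cplx (x t R : ℝ) (hx : 0 < x) (ht : 0 < t) :
    ∫ l in (-R)..R, Complex.exp (Complex.I * (l : ℂ) * (x : ℂ)) *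
              (Complex.exp (-(l : ℂ) ^ 2 * (t : ℂ)) - 1) * (l : ℂ)⁻¹
    = 2 * Complex.I * ((∫ l in (0:ℝ)..R, (x * Real.sinc (l * x) * Real.exp (-t * l^2) - x * Real.sinc (l * x)) : ℝ) : ℂ) := by
  have hc := Real.continuous_sinc
  set g : ℝ → ℝ := fun l => x * Real.sinc (l * x) * Real.exp (-t * l^2) - x * Real.sinc (l * x) with hg
  set k : ℝ → ℝ := fun l => (Real.exp (-t * l^2) - 1) * l⁻¹ with hk
  set f : ℝ → ℂ := fun l => Complex.exp (Complex.I * (l : ℂ) * (x : ℂ)) *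
              (Complex.exp (-(l : ℂ) ^ 2 * (t : ℂ)) - 1) * (l : ℂ)⁻¹ with hf
  have hk_eq : ∀ l, f l = Complex.exp ((l * x : ℝ) * Complex.I) * (k l : ℂ) := by
    intro l
    simp only [hf, hk]
    push_cast
    rw [mul_assoc]
    congr 2
    · ring
    · congr 2; ring
  have hk_le : ∀ l, |k l| ≤ t * |l| := by
    intro l
    rcases eq_or_ne l 0 with rfl | hl
    · simp [hk]
    simp only [hk]
    rw [abs_mul, abs_inv, ← div_eq_mul_inv, div_le_iff₀ (abs_pos.2 hl), mul_assoc, abs_mul_abs_self, abs_le]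
    constructor
    · nlinarith [Real.add_one_le_exp (-t * l^2)]
    · have : Real.exp (-t * l^2) ≤ 1 := Real.exp_le_one_iff.2 (by nlinarith [sq_nonneg l])
      nlinarith [mul_self_nonneg l]
  have hkm : Measurable k := by simp only [hk]; fun_prop
  have hint : ∀ a b, IntervalIntegrable f volume a b := by
    intro a b
    refine IntervalIntegrable.mono_fun'
      ((by fun_prop : Continuous fun l : ℝ => t * |l|).intervalIntegrable a b) ?_ ?_
    · have : f = fun l => Complex.exp ((l * x : ℝ) * Complex.I) * (k l : ℂ) := funext hk_eq
      rw [this]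
      exact Measurable.aestronglyMeasurable (by fun_prop)
    · refine Eventually.of_forall fun l => ?_
      simp only
      rw [hk_eq, norm_mul, Complex.norm_exp_ofReal_mul_I, one_mul, Complex.norm_real]
      exact hk_le l
  rw [← intervalIntegral.integral_add_adjacent_intervals (hint (-R) 0) (hint 0 R)]
  have hneg : ∫ l in (-R)..0, f l = ∫ l in (0:ℝ)..R, f (-l) := by
    rw [intervalIntegral.integral_comp_neg]; simp
  have hint' : IntervalIntegrable (fun l => f (-l)) volume 0 R := by
    have := (hint 0 (-R)).comp_sub_left 0
    simpa using this
  rw [hneg, ← intervalIntegral.integral_add hint' (hint 0 R), ← intervalIntegral.integral_ofReal,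
    ← intervalIntegral.integral_const_mul]
  refine intervalIntegral.integral_congr fun l _ => ?_
  have hkn : k (-l) = - k l := by simp only [hk]; rw [neg_sq, inv_neg]; ring
  have hgk : g l = Real.sin (l * x) * k l := by
    simp only [hg, hk]
    rcases eq_or_ne l 0 with rfl | hl
    · simp
    rw [Real.sinc_of_ne_zero (by positivity)]
    field_simp
  change f (-l) + f l = 2 * Complex.I * ((g l : ℝ) : ℂ)
  rw [hk_eq, hk_eq, hkn, hgk, Complex.exp_mul_I, Complex.exp_mul_I]
  push_cast
  rw [neg_mul, Complex.cos_neg, Complex.sin_neg]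
  ring

lemma auxV_deriv_x (t : ℝ) (x : ℝ) : HasDerivAt (fun y => ((auxV y t : ℝ) : ℂ))
    ((-(2 / Real.sqrt Real.pi * (Real.exp (-(x / (2 * Real.sqrt t))^2) * (1 / (2 * Real.sqrt t)))) : ℝ) : ℂ) x := by
  have h1 := (auxE_hasDerivAt (x / (2 * Real.sqrt t))).comp x ((hasDerivAt_id x).div_const (2 * Real.sqrt t))
  exact ((h1.const_mul (2 / Real.sqrt Real.pi)).const_sub 1).ofReal_comp

lemma auxV_deriv_xx (t : ℝ) (x : ℝ) : HasDerivAt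
    (fun x : ℝ => ((-(2 / Real.sqrt Real.pi * (Real.exp (-(x / (2 * Real.sqrt t))^2) * (1 / (2 * Real.sqrt t)))) : ℝ) : ℂ))
    ((2 / Real.sqrt Real.pi * (Real.exp (-(x / (2 * Real.sqrt t))^2) * (2 * x / (2 * Real.sqrt t)^3)) : ℝ) : ℂ) x := by
  have h0 := ((((hasDerivAt_id x).div_const (2 * Real.sqrt t)).pow 2).neg).exp
  have h1 := ((h0.mul_const (1 / (2 * Real.sqrt t))).const_mul (2 / Real.sqrt Real.pi)).neg
  refine (h1.congr_deriv ?_).ofReal_comp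
  simp only [Pi.neg_apply, Pi.pow_apply, id, Nat.cast_ofNat, Nat.add_one_sub_one, pow_one]
  ring

lemma auxV_deriv_t (t : ℝ) (x : ℝ) (ht : 0 < t) : HasDerivAt (fun s => ((auxV x s : ℝ) : ℂ))
    ((2 / Real.sqrt Real.pi * (Real.exp (-(x / (2 * Real.sqrt t))^2) * (2 * x / (2 * Real.sqrt t)^3)) : ℝ) : ℂ) t := by
  have hs : 0 < Real.sqrt t := Real.sqrt_pos.2 ht
  have h0 := (hasDerivAt_const t x).div ((Real.hasDerivAt_sqrt ht.ne').const_mul 2) (by positivity)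
  have h1 := (auxE_hasDerivAt (x / (2 * Real.sqrt t))).comp t h0
  refine (((h1.const_mul (2 / Real.sqrt Real.pi)).const_sub 1).congr_deriv ?_).ofReal_comp
  field_simp
  ring

/-- The function `v(x,t) = (i/π)·lim_{R→∞} ∫_{−R}^{R} e^{iλx}(e^{−λ²t} − 1) λ⁻¹ dλ` is
well defined on `Q` (the symmetric limit exists), is smooth on `Q`, satisfies the heat
equation there, and satisfies `v(0⁺,t) = 1` for `t > 0` and `v(x,0⁺) = 0` for `x > 0`. -/
theorem heat_dirichlet_step_solution :
    ∃ L v : ℝ → ℝ → ℂ,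
      (∀ x t : ℝ, 0 < x → 0 < t →
        Tendsto (fun R : ℝ =>
            ∫ l in (-R)..R, Complex.exp (Complex.I * (l : ℂ) * (x : ℂ)) *
              (Complex.exp (-(l : ℂ) ^ 2 * (t : ℂ)) - 1) * (l : ℂ)⁻¹)
          atTop (nhds (L x t))) ∧
      (∀ x t : ℝ, v x t = Complex.I / (Real.pi : ℂ) * L x t) ∧
      ContDiffOn ℝ (⊤ : ℕ∞) (fun p : ℝ × ℝ => v p.1 p.2) quarterPlane ∧
      (∀ x t : ℝ, 0 < x → 0 < t →
        deriv (fun s => v x s) t = iteratedDeriv 2 (fun y => v y t) x) ∧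
      (∀ t : ℝ, 0 < t →
        Tendsto (fun x => v x t) (nhdsWithin 0 (Ioi 0)) (nhds (1 : ℂ))) ∧
      (∀ x : ℝ, 0 < x →
        Tendsto (fun t => v x t) (nhdsWithin 0 (Ioi 0)) (nhds (0 : ℂ))) := by
  have hpi : (Real.pi : ℂ) ≠ 0 := Complex.ofReal_ne_zero.2 Real.pi_ne_zero
  refine ⟨fun x t => 2 * Complex.I * ((-(Real.pi / 2) * auxV x t : ℝ) : ℂ), fun x t => ((auxV x t : ℝ) : ℂ),
    ?_, ?_, ?_, ?_, ?_, ?_⟩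
  · intro x t hx ht
    simp_rw [aux_cplx x t _ hx ht]
    exact ((Complex.continuous_ofReal.tendsto _).comp (aux_real_lim x t hx ht)).const_mul _
  · intro x t
    push_cast
    field_simp
    rw [Complex.I_sq]
    ring
  · have h1 : ContDiffOn ℝ (⊤ : ℕ∞) (fun p : ℝ × ℝ => auxV p.1 p.2) quarterPlane := by
      unfold auxV
      refine contDiffOn_const.sub (contDiffOn_const.mul (auxE_contDiff.comp_contDiffOn ?_))
      refine contDiff_fst.contDiffOn.div (contDiffOn_const.mul ?_) ?_
      · rintro p (hp : 0 < p.1 ∧ 0 < p.2)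
        exact (contDiff_snd.contDiffAt.sqrt hp.2.ne').contDiffWithinAt
      · rintro p (hp : 0 < p.1 ∧ 0 < p.2)
        have := Real.sqrt_pos.2 hp.2
        positivity
    exact Complex.ofRealCLM.contDiff.comp_contDiffOn h1
  · intro x t hx ht
    rw [(auxV_deriv_t t x ht).deriv, iteratedDeriv_succ, iteratedDeriv_one]
    have : deriv (fun y => ((auxV y t : ℝ) : ℂ)) = _ := funext fun y => (auxV_deriv_x t y).deriv
    rw [this, (auxV_deriv_xx t x).deriv]
  · intro t ht
    have h := (auxV_deriv_x t 0).continuousAt.tendsto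
    have h0 : auxV 0 t = 1 := by simp [auxV, auxE]
    rw [h0, Complex.ofReal_one] at h
    exact h.mono_left nhdsWithin_le_nhds
  · intro x hx
    have h1 : Tendsto (fun t : ℝ => x / (2 * Real.sqrt t)) (nhdsWithin 0 (Ioi 0)) atTop := by
      have h2 : Tendsto (fun t : ℝ => 2 * Real.sqrt t) (nhdsWithin 0 (Ioi 0)) (nhdsWithin 0 (Ioi 0)) := by
        refine tendsto_nhdsWithin_iff.2 ⟨?_, ?_⟩
        · have : Continuous fun t : ℝ => 2 * Real.sqrt t := by fun_prop
          have := this.tendsto 0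
          simp only [Real.sqrt_zero, mul_zero] at this
          exact this.mono_left nhdsWithin_le_nhds
        · filter_upwards [self_mem_nhdsWithin] with t ht
          have := Real.sqrt_pos.2 ht
          exact mem_Ioi.2 (by positivity)
      exact (tendsto_inv_nhdsGT_zero.comp h2).const_mul_atTop hx
    have h3 := ((auxE_tendsto.comp h1).const_mul (2 / Real.sqrt Real.pi)).const_sub 1
    have hp : 0 < Real.sqrt Real.pi := Real.sqrt_pos.2 Real.pi_pos
    have e : 1 - 2 / Real.sqrt Real.pi * (Real.sqrt Real.pi / 2) = 0 := by field_simp; norm_num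
    rw [e] at h3
    have := (Complex.continuous_ofReal.tendsto 0).comp h3
    rw [Complex.ofReal_zero] at this
    exact this
end

section
/- For every (x,t) in the open quarter-plane Q, the partial derivative with respect to t of v(x,t) = (i/π) · lim_{R→∞} ∫_{−R}^{R} exp(iλx) · (exp(−λ²t) − 1) · λ^{−1} dλ equals x/(2√π · t^{3/2}) · exp(−x²/(4t)). -/
open MeasureTheory Filter Set


theorem aux_hasDeriv (x l s : ℝ) (c : ℂ) :
    HasDerivAt (fun s : ℝ => Complex.exp (Complex.I * (l : ℂ) * (x : ℂ)) *
      (Complex.exp (-(l : ℂ) ^ 2 * (s : ℂ)) - c) * (l : ℂ)⁻¹)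
      (-((l : ℂ) * Complex.exp (Complex.I * (x : ℂ) * (l : ℂ)) * Complex.exp (-(s : ℂ) * (l : ℂ) ^ 2))) s := by
  have h1 : HasDerivAt (fun s : ℝ => -(l : ℂ) ^ 2 * (s : ℂ)) (-(l : ℂ) ^ 2 * 1) s :=
    (Complex.ofRealCLM.hasDerivAt (x := s)).const_mul _
  have h2 := (((h1.cexp).sub_const c).const_mul
    (Complex.exp (Complex.I * (l : ℂ) * (x : ℂ)))).mul_const ((l : ℂ)⁻¹)
  refine h2.congr_deriv ?_
  have e1 : Complex.I * (x : ℂ) * (l : ℂ) = Complex.I * l * x := by ring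
  have e2 : -(s : ℂ) * (l : ℂ) ^ 2 = -(l : ℂ) ^ 2 * s := by ring
  rw [e1, e2]
  by_cases hl : (l : ℂ) = 0
  · simp [hl]
  · field_simp

theorem aux_norm (x l s : ℝ) :
    ‖-((l : ℂ) * Complex.exp (Complex.I * (x : ℂ) * (l : ℂ)) * Complex.exp (-(s : ℂ) * (l : ℂ) ^ 2))‖
      = |l| * Real.exp (-s * l ^ 2) := by
  have e1 : Complex.I * (x : ℂ) * (l : ℂ) = ((x * l : ℝ) : ℂ) * Complex.I := by push_cast; ring
  have e2 : -(s : ℂ) * (l : ℂ) ^ 2 = ((-s * l ^ 2 : ℝ) : ℂ) := by push_cast; ring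
  rw [norm_neg, norm_mul, norm_mul, e1, e2, Complex.norm_exp_ofReal_mul_I, ← Complex.ofReal_exp,
    Complex.norm_real, Complex.norm_real, mul_one, Real.norm_eq_abs, Real.norm_eq_abs, Real.abs_exp]

theorem aux_bound (x l s m : ℝ) (h : m ≤ s) :
    ‖-((l : ℂ) * Complex.exp (Complex.I * (x : ℂ) * (l : ℂ)) * Complex.exp (-(s : ℂ) * (l : ℂ) ^ 2))‖
      ≤ |l| * Real.exp (-m * l ^ 2) := by
  rw [aux_norm]
  gcongr

theorem aux_diff (x l s r m : ℝ) (hs : m ≤ s) (hr : m ≤ r) :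
    ‖Complex.exp (Complex.I * (l : ℂ) * (x : ℂ)) *
      (Complex.exp (-(l : ℂ) ^ 2 * (s : ℂ)) - Complex.exp (-(l : ℂ) ^ 2 * (r : ℂ))) * (l : ℂ)⁻¹‖
      ≤ |l| * Real.exp (-m * l ^ 2) * |s - r| := by
  have := (convex_Ici m).norm_image_sub_le_of_norm_hasDerivWithin_le
    (f := fun s : ℝ => Complex.exp (Complex.I * (l : ℂ) * (x : ℂ)) *
      (Complex.exp (-(l : ℂ) ^ 2 * (s : ℂ)) - Complex.exp (-(l : ℂ) ^ 2 * (r : ℂ))) * (l : ℂ)⁻¹)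
    (fun y _ => (aux_hasDeriv x l y _).hasDerivWithinAt)
    (fun y hy => aux_bound x l y m hy) hr hs
  simpa using this

theorem aux_meas (x s : ℝ) (c : ℝ → ℂ) (hc : Measurable c) :
    Measurable (fun l : ℝ => Complex.exp (Complex.I * (l : ℂ) * (x : ℂ)) *
      (Complex.exp (-(l : ℂ) ^ 2 * (s : ℂ)) - c l) * (l : ℂ)⁻¹) := by
  fun_prop

theorem aux_gauss_int (m : ℝ) (hm : 0 < m) :
    Integrable (fun l : ℝ => |l| * Real.exp (-m * l ^ 2)) := by
  have := (integrable_mul_exp_neg_mul_sq hm).norm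
  refine this.congr (ae_of_all _ fun l => ?_)
  simp

theorem aux_integrable (x s r : ℝ) (hs : 0 < s) (hr : 0 < r) :
    Integrable (fun l : ℝ => Complex.exp (Complex.I * (l : ℂ) * (x : ℂ)) *
      (Complex.exp (-(l : ℂ) ^ 2 * (s : ℂ)) - Complex.exp (-(l : ℂ) ^ 2 * (r : ℂ))) * (l : ℂ)⁻¹) := by
  refine Integrable.mono' ((aux_gauss_int (min s r) (lt_min hs hr)).mul_const |s - r|)
    (aux_meas x s _ (by fun_prop)).aestronglyMeasurable (ae_of_all _ fun l => ?_)
  exact aux_diff x l s r _ (min_le_left _ _) (min_le_right _ _)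

theorem aux_intervalIntegrable (x s R : ℝ) (hs : 0 < s) :
    IntervalIntegrable (fun l : ℝ => Complex.exp (Complex.I * (l : ℂ) * (x : ℂ)) *
      (Complex.exp (-(l : ℂ) ^ 2 * (s : ℂ)) - 1) * (l : ℂ)⁻¹) volume (-R) R := by
  have hb : IntervalIntegrable (fun l : ℝ => |l| * Real.exp (-0 * l ^ 2) * |s - 0|) volume (-R) R :=
    Continuous.intervalIntegrable (by fun_prop) _ _
  refine hb.mono_fun' (aux_meas x s _ (by fun_prop)).aestronglyMeasurable (ae_of_all _ fun l => ?_)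
  have := aux_diff x l s 0 0 hs.le le_rfl
  simpa using this

theorem aux_G_integrable (x t : ℝ) (ht : 0 < t) :
    Integrable (fun l : ℝ => Complex.exp (Complex.I * (x : ℂ) * (l : ℂ)) *
      Complex.exp (-(t : ℂ) * (l : ℂ) ^ 2)) := by
  refine Integrable.mono' (integrable_exp_neg_mul_sq ht) (by fun_prop) (ae_of_all _ fun l => ?_)
  have e1 : Complex.I * (x : ℂ) * (l : ℂ) = ((x * l : ℝ) : ℂ) * Complex.I := by push_cast; ring
  have e2 : -(t : ℂ) * (l : ℂ) ^ 2 = ((-t * l ^ 2 : ℝ) : ℂ) := by push_cast; ring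
  rw [norm_mul, e1, e2, Complex.norm_exp_ofReal_mul_I, ← Complex.ofReal_exp,
    Complex.norm_real, Real.norm_eq_abs, Real.abs_exp, one_mul]

theorem aux_lG_integrable (x t : ℝ) (ht : 0 < t) :
    Integrable (fun l : ℝ => (l : ℂ) * Complex.exp (Complex.I * (x : ℂ) * (l : ℂ)) *
      Complex.exp (-(t : ℂ) * (l : ℂ) ^ 2)) := by
  refine Integrable.mono' (aux_gauss_int t ht) (by fun_prop) (ae_of_all _ fun l => ?_)
  rw [← norm_neg]
  exact aux_bound x l t t le_rfl

theorem aux_lG_value (x t : ℝ) (ht : 0 < t) :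
    2 * (t : ℂ) * ∫ l : ℝ, (l : ℂ) * Complex.exp (Complex.I * (x : ℂ) * (l : ℂ)) *
      Complex.exp (-(t : ℂ) * (l : ℂ) ^ 2) =
    Complex.I * x * (((Real.sqrt (Real.pi / t) * Real.exp (-(x ^ 2) / (4 * t)) : ℝ)) : ℂ) := by
  have hG := aux_G_integrable x t ht
  have hL := aux_lG_integrable x t ht
  have hd : ∀ l : ℝ, HasDerivAt (fun l : ℝ => Complex.exp (Complex.I * (x : ℂ) * (l : ℂ)) *
      Complex.exp (-(t : ℂ) * (l : ℂ) ^ 2))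
      (Complex.I * x * (Complex.exp (Complex.I * (x : ℂ) * (l : ℂ)) *
        Complex.exp (-(t : ℂ) * (l : ℂ) ^ 2)) - 2 * (t : ℂ) * ((l : ℂ) *
        Complex.exp (Complex.I * (x : ℂ) * (l : ℂ)) * Complex.exp (-(t : ℂ) * (l : ℂ) ^ 2))) l := by
    intro l
    have h0 : HasDerivAt (fun l : ℝ => (l : ℂ)) 1 l := Complex.ofRealCLM.hasDerivAt (x := l)
    have h1 := (h0.const_mul (Complex.I * (x : ℂ))).cexp
    have h2 := ((h0.pow 2).const_mul (-(t : ℂ))).cexp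
    refine (h1.mul h2).congr_deriv ?_
    simp
    ring
  have h0 := integral_eq_zero_of_hasDerivAt_of_integrable hd
    ((hG.const_mul _).sub (hL.const_mul _)) hG
  rw [integral_sub (hG.const_mul _) (hL.const_mul _), integral_const_mul, integral_const_mul,
    sub_eq_zero] at h0
  rw [← h0, fourierIntegral_gaussian (by simpa using ht)]
  congr 1
  have e : ((1 : ℂ) / 2) = ((1 / 2 : ℝ) : ℂ) := by push_cast; rfl
  rw [e, ← Complex.ofReal_div, ← Complex.ofReal_cpow (by positivity), Real.sqrt_eq_rpow]
  push_cast
  rfl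

/-- If `v(x,t) = (i/π)·lim_{R→∞} ∫_{−R}^{R} e^{iλx}(e^{−λ²t} − 1) λ⁻¹ dλ` on the open
quarter-plane `Q`, then at every point of `Q` its partial derivative with respect to `t`
equals `x/(2√π·t^{3/2})·exp(−x²/(4t))`. -/
theorem heat_dirichlet_step_solution_time_derivative (v : ℝ → ℝ → ℂ)
    (hv : ∀ x t : ℝ, 0 < x → 0 < t →
      Tendsto (fun R : ℝ =>
          Complex.I / (Real.pi : ℂ) *
            ∫ l in (-R)..R, Complex.exp (Complex.I * (l : ℂ) * (x : ℂ)) *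
              (Complex.exp (-(l : ℂ) ^ 2 * (t : ℂ)) - 1) * (l : ℂ)⁻¹)
        atTop (nhds (v x t))) :
    ∀ x t : ℝ, 0 < x → 0 < t →
      deriv (fun s => v x s) t
        = ((x / (2 * Real.sqrt Real.pi * t ^ ((3 : ℝ) / 2)) *
            Real.exp (-(x ^ 2) / (4 * t)) : ℝ) : ℂ) := by
  intro x t hx ht
  have key : ∀ s : ℝ, 0 < s → v x s = v x t + Complex.I / (Real.pi : ℂ) *
      ∫ l : ℝ, Complex.exp (Complex.I * (l : ℂ) * (x : ℂ)) *
      (Complex.exp (-(l : ℂ) ^ 2 * (s : ℂ)) - Complex.exp (-(l : ℂ) ^ 2 * (t : ℂ))) *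
        (l : ℂ)⁻¹ := by
    intro s hs
    have h1 := (hv x s hx hs).sub (hv x t hx ht)
    have h2 := (intervalIntegral_tendsto_integral (aux_integrable x s t hs ht)
      tendsto_neg_atTop_atBot tendsto_id).const_mul (Complex.I / (Real.pi : ℂ))
    have h3 := tendsto_nhds_unique h1 (h2.congr fun R => ?_)
    · rw [← h3]; ring
    · simp only [id]
      rw [← mul_sub, ← intervalIntegral.integral_sub (aux_intervalIntegrable x s R hs)
        (aux_intervalIntegrable x t R ht)]
      congr 2
      funext l
      ring
  have hD := (hasDerivAt_integral_of_dominated_loc_of_deriv_le (μ := volume) (x₀ := t)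
    (s := Ioi (t / 2)) (bound := fun l : ℝ => |l| * Real.exp (-(t / 2) * l ^ 2))
    (F := fun (s : ℝ) (l : ℝ) => Complex.exp (Complex.I * (l : ℂ) * (x : ℂ)) *
      (Complex.exp (-(l : ℂ) ^ 2 * (s : ℂ)) - Complex.exp (-(l : ℂ) ^ 2 * (t : ℂ))) *
        (l : ℂ)⁻¹)
    (F' := fun (s : ℝ) (l : ℝ) => -((l : ℂ) * Complex.exp (Complex.I * (x : ℂ) * (l : ℂ)) *
      Complex.exp (-(s : ℂ) * (l : ℂ) ^ 2)))
    (Ioi_mem_nhds (by linarith))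
    (Eventually.of_forall fun s => (aux_meas x s _ (by fun_prop)).aestronglyMeasurable)
    (aux_integrable x t t ht ht)
    (by fun_prop)
    (ae_of_all _ fun l s hs => aux_bound x l s _ (le_of_lt hs))
    (aux_gauss_int _ (by linarith))
    (ae_of_all _ fun l s _ => aux_hasDeriv x l s _)).2
  have hD2 := (hD.const_mul (Complex.I / (Real.pi : ℂ))).const_add (v x t)
  have hev := Filter.eventually_of_mem (Ioi_mem_nhds ht) (fun s hs => key s hs)
  rw [(hD2.congr_of_eventuallyEq hev).deriv, integral_neg]
  have hval := aux_lG_value x t ht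
  have htc : (t : ℂ) ≠ 0 := by exact_mod_cast ht.ne'
  have hpi : (Real.pi : ℂ) ≠ 0 := by exact_mod_cast Real.pi_ne_zero
  have hval2 := eq_div_of_mul_eq (mul_ne_zero two_ne_zero htc) ((mul_comm _ _).trans hval)
  rw [hval2]
  have hr : x / (2 * Real.sqrt Real.pi * t ^ ((3 : ℝ) / 2)) * Real.exp (-(x ^ 2) / (4 * t)) =
      1 / Real.pi * (x * (Real.sqrt (Real.pi / t) * Real.exp (-(x ^ 2) / (4 * t))) / (2 * t)) := by
    have e3 : t ^ ((3 : ℝ) / 2) = t * Real.sqrt t := by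
      rw [Real.sqrt_eq_rpow, show (3 : ℝ) / 2 = 1 + 1 / 2 by norm_num, Real.rpow_add ht,
        Real.rpow_one]
    rw [e3, Real.sqrt_div Real.pi_pos.le]
    have hp : Real.sqrt Real.pi ≠ 0 := (Real.sqrt_pos.2 Real.pi_pos).ne'
    have hst : Real.sqrt t ≠ 0 := (Real.sqrt_pos.2 ht).ne'
    have hpp : Real.pi = Real.sqrt Real.pi * Real.sqrt Real.pi :=
      (Real.mul_self_sqrt Real.pi_pos.le).symm
    generalize Real.sqrt Real.pi = p at *
    rw [hpp]
    field_simp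
  rw [hr]
  push_cast
  linear_combination (-(1 / (Real.pi : ℂ) * ((x : ℂ) * (((Real.sqrt (Real.pi / t) : ℝ) : ℂ) *
    Complex.exp (-((x : ℂ) ^ 2) / (4 * t))) / (2 * t)))) * Complex.I_mul_I
end

section
/- The function v(x,t) = −(3/(2πi)) ∫_{s∈ℝ} exp( i(s+i)x + i(s+i)³ t ) · (s+i)^{−1} ds (i.e. v_ε with ε = 1) is smooth on the open quarter-plane Q, satisfies the linear KdV equation ∂v/∂t = −∂³v/∂x³ at every point of Q, and satisfies lim_{x→0⁺} v(x,t) = 1 for every t > 0 and lim_{t→0⁺} v(x,t) = 0 for every x > 0. -/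
open MeasureTheory Filter Set

/-- `v_ε(x,t) = −(3/(2πi)) ∫_{s∈ℝ} exp(i(s+iε)x + i(s+iε)³t) · (s+iε)⁻¹ ds`,
the parametrization over `s ∈ ℝ` of the contour integral over the line `Im λ = ε`. -/
noncomputable def kdvStepSol (ε : ℝ) : ℝ → ℝ → ℂ := fun x t =>
  -(3 / (2 * (Real.pi : ℂ) * Complex.I)) *
    ∫ s : ℝ, Complex.exp (Complex.I * ((s : ℂ) + Complex.I * (ε : ℂ)) * (x : ℂ) +
        Complex.I * ((s : ℂ) + Complex.I * (ε : ℂ)) ^ 3 * (t : ℂ)) *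
      ((s : ℂ) + Complex.I * (ε : ℂ))⁻¹


lemma kdv_norm_exp (e s x t : ℝ) :
    ‖Complex.exp (Complex.I * ((s : ℂ) + Complex.I * (e : ℂ)) * (x : ℂ) +
        Complex.I * ((s : ℂ) + Complex.I * (e : ℂ)) ^ 3 * (t : ℂ))‖ =
      Real.exp (-e * x + (e ^ 3 - 3 * s ^ 2 * e) * t) := by
  rw [Complex.norm_exp]
  congr 1
  simp [pow_succ, -mul_eq_mul_right_iff]
  ring

lemma kdv_normSq (e s : ℝ) : ‖(s : ℂ) + Complex.I * (e : ℂ)‖ ^ 2 = s ^ 2 + e ^ 2 := by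
  rw [Complex.sq_norm, Complex.normSq_apply]
  simp
  ring

lemma kdv_norm_ge {e : ℝ} (he : 0 < e) (s : ℝ) : e ≤ ‖(s : ℂ) + Complex.I * (e : ℂ)‖ := by
  have := kdv_normSq e s
  have h2 := norm_nonneg ((s : ℂ) + Complex.I * (e : ℂ))
  nlinarith [sq_nonneg s]

lemma kdv_ne {e : ℝ} (he : 0 < e) (s : ℝ) : (s : ℂ) + Complex.I * (e : ℂ) ≠ 0 := by
  rw [← norm_pos_iff]
  exact he.trans_le (kdv_norm_ge he s)

lemma kdv_gauss_int (n : ℕ) {b : ℝ} (hb : 0 < b) :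
    Integrable (fun s : ℝ => ‖(s : ℂ) + Complex.I * ((1 : ℝ) : ℂ)‖ ^ n * Real.exp (-b * s ^ 2)) := by
  have h0 := (integrable_exp_neg_mul_sq (half_pos hb)).const_mul
    ((n.factorial : ℝ) / (b / 2) ^ n * Real.exp (b / 2))
  refine h0.mono' (by fun_prop) (ae_of_all _ fun s => ?_)
  rw [Real.norm_of_nonneg (by positivity)]
  have h1 := kdv_normSq 1 s
  have h2 := kdv_norm_ge one_pos s
  set r := ‖(s : ℂ) + Complex.I * ((1 : ℝ) : ℂ)‖
  have h3 : r ^ n ≤ (s ^ 2 + 1) ^ n := by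
    apply pow_le_pow_left₀ (by linarith)
    nlinarith
  have h4 := Real.pow_div_factorial_le_exp (x := b / 2 * (s ^ 2 + 1)) (by positivity) n
  rw [div_le_iff₀ (by positivity), mul_pow] at h4
  have h5 : (s ^ 2 + 1) ^ n ≤ (n.factorial : ℝ) / (b / 2) ^ n * Real.exp (b / 2 * (s ^ 2 + 1)) := by
    rw [div_mul_eq_mul_div, le_div_iff₀ (by positivity)]
    linarith
  calc r ^ n * Real.exp (-b * s ^ 2)
      ≤ ((n.factorial : ℝ) / (b / 2) ^ n * Real.exp (b / 2 * (s ^ 2 + 1))) * Real.exp (-b * s ^ 2) := by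
        gcongr
        exact h3.trans h5
    _ = _ := by
        rw [mul_assoc, mul_assoc, ← Real.exp_add, ← Real.exp_add]
        congr 2
        ring

/-- the integrand with extra weight -/
noncomputable def kdvK (k : ℕ) (p : ℝ × ℝ) (s : ℝ) : ℂ :=
  ((s : ℂ) + Complex.I * ((1 : ℝ) : ℂ)) ^ k *
  (Complex.exp (Complex.I * ((s : ℂ) + Complex.I * ((1 : ℝ) : ℂ)) * (p.1 : ℂ) +
        Complex.I * ((s : ℂ) + Complex.I * ((1 : ℝ) : ℂ)) ^ 3 * (p.2 : ℂ)) *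
      ((s : ℂ) + Complex.I * ((1 : ℝ) : ℂ))⁻¹)

noncomputable def kdvJ (k : ℕ) (p : ℝ × ℝ) : ℂ := ∫ s : ℝ, kdvK k p s

lemma kdvK_cont (k : ℕ) (p : ℝ × ℝ) : Continuous (kdvK k p) := by
  unfold kdvK
  refine Continuous.mul (by fun_prop) (Continuous.mul (by fun_prop) ?_)
  exact Continuous.inv₀ (by fun_prop) (fun s => kdv_ne one_pos s)

lemma kdvK_bound (k : ℕ) (p : ℝ × ℝ) (s X a b : ℝ) (hX : |p.1| ≤ X) (ha : a ≤ p.2)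
    (hb : p.2 ≤ b) :
    ‖kdvK k p s‖ ≤ Real.exp (X + b) *
      (‖(s : ℂ) + Complex.I * ((1 : ℝ) : ℂ)‖ ^ k * Real.exp (-(3 * a) * s ^ 2)) := by
  unfold kdvK
  rw [norm_mul, norm_mul, kdv_norm_exp, norm_pow, norm_inv]
  have h2 := kdv_norm_ge one_pos s
  set r := ‖(s : ℂ) + Complex.I * ((1 : ℝ) : ℂ)‖
  have h3 : r⁻¹ ≤ 1 := inv_le_one_of_one_le₀ h2
  have h4 : Real.exp (-1 * p.1 + (1 ^ 3 - 3 * s ^ 2 * 1) * p.2) ≤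
      Real.exp (X + b) * Real.exp (-(3 * a) * s ^ 2) := by
    rw [← Real.exp_add]
    apply Real.exp_le_exp.2
    have := neg_abs_le p.1
    nlinarith [mul_nonneg (sq_nonneg s) (sub_nonneg.2 ha)]
  calc r ^ k * (Real.exp (-1 * p.1 + (1 ^ 3 - 3 * s ^ 2 * 1) * p.2) * r⁻¹)
      ≤ r ^ k * ((Real.exp (X + b) * Real.exp (-(3 * a) * s ^ 2)) * 1) := by gcongr
    _ = _ := by ring

lemma kdvK_int (k : ℕ) (p : ℝ × ℝ) (hp : 0 < p.2) : Integrable (kdvK k p) :=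
  Integrable.mono' ((kdv_gauss_int k (b := 3 * p.2) (by linarith)).const_mul _)
    (kdvK_cont k p).aestronglyMeasurable
    (ae_of_all _ fun s => kdvK_bound k p s _ _ _ le_rfl le_rfl le_rfl)

noncomputable def kdvA : ℝ × ℝ →L[ℝ] ℂ := Complex.I • (Complex.ofRealCLM.comp (ContinuousLinearMap.fst ℝ ℝ ℝ))
noncomputable def kdvB : ℝ × ℝ →L[ℝ] ℂ := Complex.I • (Complex.ofRealCLM.comp (ContinuousLinearMap.snd ℝ ℝ ℝ))

lemma kdvK_hasFDerivAt (k : ℕ) (s : ℝ) (p : ℝ × ℝ) :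
    HasFDerivAt (fun q => kdvK k q s) (kdvK (k + 1) p s • kdvA + kdvK (k + 3) p s • kdvB) p := by
  have h1 : HasFDerivAt (fun q : ℝ × ℝ => ((q.1 : ℝ) : ℂ))
      (Complex.ofRealCLM.comp (ContinuousLinearMap.fst ℝ ℝ ℝ)) p :=
    (Complex.ofRealCLM.comp (ContinuousLinearMap.fst ℝ ℝ ℝ)).hasFDerivAt
  have h2 : HasFDerivAt (fun q : ℝ × ℝ => ((q.2 : ℝ) : ℂ))
      (Complex.ofRealCLM.comp (ContinuousLinearMap.snd ℝ ℝ ℝ)) p :=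
    (Complex.ofRealCLM.comp (ContinuousLinearMap.snd ℝ ℝ ℝ)).hasFDerivAt
  have h := ((((h1.const_mul (Complex.I * ((s : ℂ) + Complex.I * ((1 : ℝ) : ℂ)))).add
    (h2.const_mul (Complex.I * ((s : ℂ) + Complex.I * ((1 : ℝ) : ℂ)) ^ 3))).cexp).mul_const
      ((s : ℂ) + Complex.I * ((1 : ℝ) : ℂ))⁻¹).const_mul (((s : ℂ) + Complex.I * ((1 : ℝ) : ℂ)) ^ k)
  refine h.congr_fderiv ?_
  ext <;> simp [kdvA, kdvB, kdvK] <;> ring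

lemma kdvJ_hasFDerivAt (k : ℕ) (p : ℝ × ℝ) (hp : 0 < p.2) :
    HasFDerivAt (kdvJ k) (kdvJ (k + 1) p • kdvA + kdvJ (k + 3) p • kdvB) p := by
  have hh : 0 < p.2 / 2 := by linarith
  have hi1 := kdvK_int (k + 1) p hp
  have hi3 := kdvK_int (k + 3) p hp
  have h := hasFDerivAt_integral_of_dominated_of_fderiv_le (𝕜 := ℝ) (μ := volume)
    (F := kdvK k) (x₀ := p) (s := Metric.ball p (p.2 / 2))
    (F' := fun p s => kdvK (k + 1) p s • kdvA + kdvK (k + 3) p s • kdvB)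
    (bound := fun s => Real.exp (|p.1| + p.2 / 2 + (p.2 + p.2 / 2)) *
      (‖(s : ℂ) + Complex.I * ((1 : ℝ) : ℂ)‖ ^ (k + 1) * Real.exp (-(3 * (p.2 / 2)) * s ^ 2)) * ‖kdvA‖ +
      Real.exp (|p.1| + p.2 / 2 + (p.2 + p.2 / 2)) *
      (‖(s : ℂ) + Complex.I * ((1 : ℝ) : ℂ)‖ ^ (k + 3) * Real.exp (-(3 * (p.2 / 2)) * s ^ 2)) * ‖kdvB‖)
    (Metric.ball_mem_nhds p hh)
    (Eventually.of_forall fun q => (kdvK_cont k q).aestronglyMeasurable)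
    (kdvK_int k p hp)
    (((hi1.smul_const kdvA).add (hi3.smul_const kdvB)).aestronglyMeasurable)
    (ae_of_all _ fun s q hq => by
      have hd : max |q.1 - p.1| |q.2 - p.2| < p.2 / 2 := by
        simpa [Metric.mem_ball, Prod.dist_eq, Real.dist_eq] using hq
      have hd1 := (le_max_left _ _).trans_lt hd
      have hd2 := abs_lt.1 ((le_max_right _ _).trans_lt hd)
      have hX : |q.1| ≤ |p.1| + p.2 / 2 := by
        have := abs_sub_abs_le_abs_sub q.1 p.1
        linarith
      refine (norm_add_le _ _).trans ?_
      rw [norm_smul, norm_smul]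
      gcongr
      · exact kdvK_bound _ q s _ _ _ hX (by linarith) (by linarith)
      · exact kdvK_bound _ q s _ _ _ hX (by linarith) (by linarith))
    ((((kdv_gauss_int (k + 1) (b := 3 * (p.2 / 2)) (by linarith)).const_mul _).mul_const _).add
      (((kdv_gauss_int (k + 3) (b := 3 * (p.2 / 2)) (by linarith)).const_mul _).mul_const _))
    (ae_of_all _ fun s q _ => kdvK_hasFDerivAt k s q)
  rw [integral_add (hi1.smul_const kdvA) (hi3.smul_const kdvB), integral_smul_const,
    integral_smul_const] at h
  exact h

lemma kdvU_open : IsOpen {p : ℝ × ℝ | 0 < p.2} := isOpen_lt continuous_const continuous_snd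

lemma kdvJ_contDiff (n : ℕ) : ∀ k, ContDiffOn ℝ n (kdvJ k) {p : ℝ × ℝ | 0 < p.2} := by
  induction n with
  | zero =>
    intro k
    exact contDiffOn_zero.2 fun p hp => (kdvJ_hasFDerivAt k p hp).continuousAt.continuousWithinAt
  | succ n ih =>
    intro k
    push_cast
    rw [contDiffOn_succ_iff_hasFDerivWithinAt_of_uniqueDiffOn kdvU_open.uniqueDiffOn]
    refine ⟨by simp, fun p => kdvJ (k + 1) p • kdvA + kdvJ (k + 3) p • kdvB, ?_, fun p hp =>
      (kdvJ_hasFDerivAt k p hp).hasFDerivWithinAt⟩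
    exact ((ih _).smul contDiffOn_const).add ((ih _).smul contDiffOn_const)

lemma kdvSol_eq (x t : ℝ) : kdvStepSol 1 x t =
    -(3 / (2 * (Real.pi : ℂ) * Complex.I)) * kdvJ 0 (x, t) := by
  simp [kdvStepSol, kdvJ, kdvK]

lemma kdvJ_dx (k : ℕ) (x t : ℝ) (ht : 0 < t) :
    HasDerivAt (fun y => kdvJ k (y, t)) (Complex.I * kdvJ (k + 1) (x, t)) x := by
  have h := (kdvJ_hasFDerivAt k (x, t) ht).comp_hasDerivAt x
    ((hasDerivAt_id x).prodMk (hasDerivAt_const x t))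
  refine h.congr_deriv ?_
  simp [kdvA, kdvB, mul_comm]

lemma kdvJ_dt (k : ℕ) (x t : ℝ) (ht : 0 < t) :
    HasDerivAt (fun y => kdvJ k (x, y)) (Complex.I * kdvJ (k + 3) (x, t)) t := by
  have h := (kdvJ_hasFDerivAt k (x, t) ht).comp_hasDerivAt t
    ((hasDerivAt_const t x).prodMk (hasDerivAt_id t))
  refine h.congr_deriv ?_
  simp [kdvA, kdvB, mul_comm]

lemma kdv_pde (x t : ℝ) (ht : 0 < t) :
      deriv (fun s => kdvStepSol 1 x s) t
        = -(iteratedDeriv 3 (fun y => kdvStepSol 1 y t) x) := by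
  simp only [kdvSol_eq]
  rw [((kdvJ_dt 0 x t ht).const_mul _).deriv]
  have hd : ∀ (c : ℂ) (k : ℕ), deriv (fun y => c * kdvJ k (y, t)) =
      fun y => (c * Complex.I) * kdvJ (k + 1) (y, t) := by
    intro c k
    ext y
    rw [((kdvJ_dx k y t ht).const_mul c).deriv, mul_assoc]
  rw [iteratedDeriv_succ', iteratedDeriv_succ', iteratedDeriv_succ', iteratedDeriv_zero,
    hd, hd, hd]
  have := Complex.I_sq
  linear_combination (-(3 / (2 * (Real.pi : ℂ) * Complex.I)) * Complex.I * kdvJ 3 (x, t)) * this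

lemma kdv_smooth :
    ContDiffOn ℝ (⊤ : ℕ∞) (fun p : ℝ × ℝ => kdvStepSol 1 p.1 p.2) quarterPlane := by
  simp only [kdvSol_eq]
  refine contDiffOn_const.mul ?_
  exact (contDiffOn_infty.2 fun n => kdvJ_contDiff n 0).mono fun p hp => hp.2

lemma kdv_int_e {e : ℝ} (he : 0 < e) (x t : ℝ) (ht : 0 < t) :
    Integrable (fun s : ℝ => Complex.exp (Complex.I * ((s : ℂ) + Complex.I * (e : ℂ)) * (x : ℂ) +
        Complex.I * ((s : ℂ) + Complex.I * (e : ℂ)) ^ 3 * (t : ℂ)) *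
      ((s : ℂ) + Complex.I * (e : ℂ))⁻¹) ∧
    ‖∫ s : ℝ, Complex.exp (Complex.I * ((s : ℂ) + Complex.I * (e : ℂ)) * (x : ℂ) +
        Complex.I * ((s : ℂ) + Complex.I * (e : ℂ)) ^ 3 * (t : ℂ)) *
      ((s : ℂ) + Complex.I * (e : ℂ))⁻¹‖ ≤
      Real.exp (-e * x + e ^ 3 * t) * e⁻¹ * √(Real.pi / (3 * e * t)) := by
  have hg := (integrable_exp_neg_mul_sq (b := 3 * e * t) (by positivity)).const_mul
    (Real.exp (-e * x + e ^ 3 * t) * e⁻¹)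
  have hb : ∀ s : ℝ, ‖Complex.exp (Complex.I * ((s : ℂ) + Complex.I * (e : ℂ)) * (x : ℂ) +
        Complex.I * ((s : ℂ) + Complex.I * (e : ℂ)) ^ 3 * (t : ℂ)) *
      ((s : ℂ) + Complex.I * (e : ℂ))⁻¹‖ ≤
      Real.exp (-e * x + e ^ 3 * t) * e⁻¹ * Real.exp (-(3 * e * t) * s ^ 2) := by
    intro s
    rw [norm_mul, kdv_norm_exp, norm_inv]
    have h2 := kdv_norm_ge he s
    have h3 : ‖(s : ℂ) + Complex.I * (e : ℂ)‖⁻¹ ≤ e⁻¹ := inv_anti₀ he h2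
    have h4 : Real.exp (-e * x + (e ^ 3 - 3 * s ^ 2 * e) * t) =
        Real.exp (-e * x + e ^ 3 * t) * Real.exp (-(3 * e * t) * s ^ 2) := by
      rw [← Real.exp_add]; congr 1; ring
    rw [h4]
    calc _ ≤ Real.exp (-e * x + e ^ 3 * t) * Real.exp (-(3 * e * t) * s ^ 2) * e⁻¹ := by gcongr
      _ = _ := by ring
  constructor
  · refine hg.mono' (Continuous.aestronglyMeasurable ?_) (ae_of_all _ hb)
    refine Continuous.mul (by fun_prop) ?_
    exact Continuous.inv₀ (by fun_prop) (fun s => kdv_ne he s)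
  · refine (norm_integral_le_of_norm_le hg (ae_of_all _ hb)).trans ?_
    rw [integral_const_mul, integral_gaussian]

lemma kdv_vert (x t e S : ℝ) (ht : 0 < t) (he : 1 ≤ e) (hx : 0 < x) :
    ‖∫ y : ℝ in (1 : ℝ)..e, Complex.exp (Complex.I * ((S : ℂ) + (y : ℂ) * Complex.I) * (x : ℂ) +
        Complex.I * ((S : ℂ) + (y : ℂ) * Complex.I) ^ 3 * (t : ℂ)) *
      ((S : ℂ) + (y : ℂ) * Complex.I)⁻¹‖ ≤ Real.exp (e ^ 3 * t) * Real.exp (-(3 * t) * S ^ 2) * |e - 1| := by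
  apply intervalIntegral.norm_integral_le_of_norm_le_const
  intro y hy
  rw [uIoc_of_le he] at hy
  have hy0 : 0 < y := by linarith [hy.1]
  rw [mul_comm (y : ℂ), norm_mul, kdv_norm_exp, norm_inv]
  have h3 : ‖(S : ℂ) + Complex.I * (y : ℂ)‖⁻¹ ≤ 1 :=
    inv_le_one_of_one_le₀ (hy.1.le.trans (kdv_norm_ge hy0 S))
  have h4 : Real.exp (-y * x + (y ^ 3 - 3 * S ^ 2 * y) * t) ≤
      Real.exp (e ^ 3 * t) * Real.exp (-(3 * t) * S ^ 2) := by
    rw [← Real.exp_add]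
    apply Real.exp_le_exp.2
    have h5 : y ^ 3 * t ≤ e ^ 3 * t := by
      have := hy.2
      gcongr
    have h6 : 0 ≤ 3 * S ^ 2 * t * (y - 1) := mul_nonneg (by positivity) (by linarith [hy.1])
    have h7 : 0 < y * x := by positivity
    nlinarith
  calc _ ≤ Real.exp (e ^ 3 * t) * Real.exp (-(3 * t) * S ^ 2) * 1 := by gcongr
    _ = _ := mul_one _

lemma kdv_shift (x t e : ℝ) (hx : 0 < x) (ht : 0 < t) (he : 1 ≤ e) :
    kdvStepSol 1 x t = kdvStepSol e x t := by
  unfold kdvStepSol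
  congr 1
  have he0 : 0 < e := by linarith
  have i1 := (kdv_int_e one_pos x t ht).1
  have i2 := (kdv_int_e he0 x t ht).1
  have t1 := intervalIntegral_tendsto_integral i1 tendsto_neg_atTop_atBot tendsto_id
  have t2 := intervalIntegral_tendsto_integral i2 tendsto_neg_atTop_atBot tendsto_id
  have hlim : Tendsto (fun S : ℝ => Real.exp (e ^ 3 * t) * Real.exp (-(3 * t) * S ^ 2) * |e - 1|)
      atTop (nhds 0) := by
    have h1 : Tendsto (fun S : ℝ => -(3 * t) * S ^ 2) atTop atBot :=
      (tendsto_pow_atTop two_ne_zero).const_mul_atTop_of_neg (by linarith)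
    have h2 := ((Real.tendsto_exp_atBot.comp h1).const_mul (Real.exp (e ^ 3 * t))).mul_const |e - 1|
    simpa using h2
  have v1 := squeeze_zero_norm (fun S => kdv_vert x t e S ht he hx) hlim
  have v2 := squeeze_zero_norm (fun S => (kdv_vert x t e (-S) ht he hx).trans_eq (by rw [neg_sq])) hlim
  rw [← sub_eq_zero]
  refine tendsto_nhds_unique (t1.sub t2) ?_
  have v3 : Tendsto _ atTop (nhds (Complex.I • (0 : ℂ) - Complex.I • (0 : ℂ))) :=
    ((v2.const_smul Complex.I).sub (v1.const_smul Complex.I))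
  rw [sub_self] at v3
  refine v3.congr fun S => ?_
  have hr := Complex.integral_boundary_rect_eq_zero_of_differentiableOn
    (fun z : ℂ => Complex.exp (Complex.I * z * (x : ℂ) + Complex.I * z ^ 3 * (t : ℂ)) * z⁻¹)
    (⟨-S, 1⟩ : ℂ) (⟨S, e⟩ : ℂ) (by
      intro z hz
      have hz' : z ≠ 0 := by
        rintro rfl
        have := hz.2
        simp only [mem_preimage, Complex.zero_im, uIcc_of_le he, mem_Icc] at this
        linarith [this.1]
      refine DifferentiableAt.differentiableWithinAt ?_
      exact DifferentiableAt.mul (by fun_prop) (differentiableAt_inv hz'))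
  simp only [mul_comm Complex.I ((1 : ℝ) : ℂ), mul_comm Complex.I (e : ℂ)]
  simp only [id]
  linear_combination -hr

lemma kdv_t_lim (x : ℝ) (hx : 0 < x) :
      Tendsto (fun t => kdvStepSol 1 x t) (nhdsWithin 0 (Ioi 0)) (nhds (0 : ℂ)) := by
  have hE : Tendsto (fun t : ℝ => t ^ (-(1 / 3) : ℝ)) (nhdsWithin 0 (Ioi 0)) atTop :=
    tendsto_rpow_neg_nhdsGT_zero (by norm_num)
  have hlim : Tendsto (fun t : ℝ => ‖-(3 / (2 * (Real.pi : ℂ) * Complex.I))‖ *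
      (Real.exp (-(t ^ (-(1 / 3) : ℝ)) * x + 1) * √(Real.pi / 3))) (nhdsWithin 0 (Ioi 0)) (nhds 0) := by
    have h1 : Tendsto (fun t : ℝ => -(t ^ (-(1 / 3) : ℝ)) * x + 1) (nhdsWithin 0 (Ioi 0)) atBot :=
      tendsto_atBot_add_const_right _ _ ((tendsto_neg_atTop_atBot.comp hE).atBot_mul_const hx)
    simpa using ((Real.tendsto_exp_atBot.comp h1).mul_const √(Real.pi / 3)).const_mul
      ‖-(3 / (2 * (Real.pi : ℂ) * Complex.I))‖
  refine squeeze_zero_norm' ?_ hlim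
  filter_upwards [hE.eventually_ge_atTop 1, self_mem_nhdsWithin] with t h1 ht
  have ht : 0 < t := ht
  set e := t ^ (-(1 / 3) : ℝ) with hedef
  have he : 0 < e := by linarith
  have h3 : e ^ 3 * t = 1 := by
    rw [hedef, ← Real.rpow_natCast, ← Real.rpow_mul ht.le]
    norm_num
    rw [Real.rpow_neg_one]
    field_simp
  rw [kdv_shift x t e hx ht h1]
  unfold kdvStepSol
  rw [norm_mul]
  gcongr
  refine (kdv_int_e he x t ht).2.trans_eq ?_
  rw [h3, mul_assoc]
  congr 1
  have h4 : Real.pi / (3 * e * t) = e ^ 2 * (Real.pi / 3) := by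
    field_simp
    linear_combination -h3
  rw [h4, Real.sqrt_mul (by positivity), Real.sqrt_sq he.le]
  field_simp

lemma kdv_E : ∃ E h : ℂ → ℂ, (∀ z, HasDerivAt E (h z) z) ∧
    ∀ z, z * h z = Complex.exp (Complex.I * z) - 1 := by
  let h : ℂ → ℂ := dslope (fun z => Complex.exp (Complex.I * z)) 0
  have hd : Differentiable ℂ h := by
    rw [← differentiableOn_univ]
    exact (Complex.differentiableOn_dslope univ_mem).2 (by fun_prop)
  obtain ⟨E, hE⟩ := hd.isExactOn_univ
  refine ⟨E, h, fun z => hE z (mem_univ z), fun z => ?_⟩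
  have := sub_smul_dslope (fun z => Complex.exp (Complex.I * z)) 0 z
  simpa using this

lemma kdv_jordan : Tendsto (fun R : ℝ => ∫ θ in (0 : ℝ)..Real.pi, Real.exp (-R * Real.sin θ))
    atTop (nhds 0) := by
  have h := intervalIntegral.tendsto_integral_filter_of_dominated_convergence
    (μ := volume) (a := 0) (b := Real.pi) (l := (atTop : Filter ℝ))
    (F := fun R θ => Real.exp (-R * Real.sin θ)) (f := fun _ => (0 : ℝ)) (fun _ => (1 : ℝ))
    (Eventually.of_forall fun R => Continuous.aestronglyMeasurable (by fun_prop))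
    (by
      filter_upwards [eventually_ge_atTop 0] with R hR
      refine ae_of_all _ fun θ hθ => ?_
      rw [uIoc_of_le Real.pi_pos.le] at hθ
      have := Real.sin_nonneg_of_nonneg_of_le_pi hθ.1.le hθ.2
      rw [Real.norm_of_nonneg (Real.exp_pos _).le]
      apply Real.exp_le_one_iff.2
      nlinarith)
    (by simp)
    (by
      have : ∀ᵐ θ : ℝ ∂volume, θ ≠ Real.pi := by
        simp [ae_iff]
      filter_upwards [this] with θ h1 hθ
      rw [uIoc_of_le Real.pi_pos.le] at hθ
      have hs := Real.sin_pos_of_pos_of_lt_pi hθ.1 (lt_of_le_of_ne hθ.2 h1)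
      exact Real.tendsto_exp_atBot.comp (tendsto_neg_atTop_atBot.atBot_mul_const hs))
  simpa using h

lemma kdv_finite (t S : ℝ) (ht : 0 < t) :
    ∃ R a : ℝ, R = t * ‖(S : ℂ) + Complex.I‖ ^ 3 ∧ a = Complex.arg ((S : ℂ) + Complex.I) ∧
    ∫ s : ℝ in (-S)..S, Complex.exp (Complex.I * ((s : ℂ) + Complex.I) ^ 3 * (t : ℂ)) *
      ((s : ℂ) + Complex.I)⁻¹ = -(2 * Real.pi * Complex.I / 3) - Complex.I / 3 *
        ∫ θ in (3 * a)..(Real.pi - 3 * a), Complex.exp (Complex.I * (R * Complex.exp (θ * Complex.I))) := by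
  refine ⟨_, _, rfl, rfl, ?_⟩
  obtain ⟨E, h, hE, hh⟩ := kdv_E
  set R := t * ‖(S : ℂ) + Complex.I‖ ^ 3 with hR
  set a := Complex.arg ((S : ℂ) + Complex.I) with ha
  have hne : ∀ s : ℝ, (s : ℂ) + Complex.I ≠ 0 := fun s => by simpa using kdv_ne one_pos s
  have him : ∀ s : ℝ, ((s : ℂ) + Complex.I).im = 1 := fun s => by simp
  -- step 1
  have hA : ∫ s : ℝ in (-S)..S, Complex.exp (Complex.I * ((s : ℂ) + Complex.I) ^ 3 * (t : ℂ)) *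
      ((s : ℂ) + Complex.I)⁻¹ =
      (Complex.log ((S : ℂ) + Complex.I) + E (((S : ℂ) + Complex.I) ^ 3 * t) / 3) -
      (Complex.log (((-S : ℝ) : ℂ) + Complex.I) + E ((((-S : ℝ) : ℂ) + Complex.I) ^ 3 * t) / 3) := by
    refine intervalIntegral.integral_eq_sub_of_hasDerivAt
      (f := fun s : ℝ => Complex.log ((s : ℂ) + Complex.I) + E (((s : ℂ) + Complex.I) ^ 3 * t) / 3)
      (fun s _ => ?_) ?_
    · have h1 : HasDerivAt (fun s : ℝ => (s : ℂ) + Complex.I) 1 s :=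
        (Complex.ofRealCLM.hasDerivAt (x := s)).add_const Complex.I
      have hsl : ((s : ℂ) + Complex.I) ∈ Complex.slitPlane := by
        right; rw [him]; exact one_ne_zero
      have h2 := (Complex.hasDerivAt_log hsl).comp s h1
      have h3 := (h1.pow 3).mul_const (t : ℂ)
      have h4 := ((hE (((s : ℂ) + Complex.I) ^ 3 * t)).comp s h3).div_const 3
      refine (h2.add h4).congr_deriv ?_
      have h5 := hh (((s : ℂ) + Complex.I) ^ 3 * t)
      rw [← mul_assoc] at h5
      have h6 := hne s
      field_simp
      push_cast
      linear_combination 3 * h5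
    · refine (Continuous.mul (by fun_prop) ?_).intervalIntegrable _ _
      exact Continuous.inv₀ (by fun_prop) hne
  -- step 2
  have hB : E (R * Complex.exp (((3 * a : ℝ) : ℂ) * Complex.I)) -
      E (R * Complex.exp (((Real.pi - 3 * a : ℝ) : ℂ) * Complex.I)) =
      - ∫ θ in (3 * a)..(Real.pi - 3 * a),
        Complex.I * (Complex.exp (Complex.I * (R * Complex.exp (θ * Complex.I))) - 1) := by
    rw [intervalIntegral.integral_eq_sub_of_hasDerivAt
      (f := fun θ : ℝ => E (R * Complex.exp (θ * Complex.I)))]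
    · ring
    · intro θ _
      have h1 : HasDerivAt (fun θ : ℝ => (R : ℂ) * Complex.exp (θ * Complex.I))
          (R * (Complex.exp (θ * Complex.I) * (1 * Complex.I))) θ :=
        (((Complex.ofRealCLM.hasDerivAt (x := θ)).mul_const Complex.I).cexp).const_mul _
      refine ((hE _).comp θ h1).congr_deriv ?_
      have h5 := hh (R * Complex.exp (θ * Complex.I))
      linear_combination Complex.I * h5
    · exact Continuous.intervalIntegrable (by fun_prop) _ _
  have hpol : (S : ℂ) + Complex.I = ‖(S : ℂ) + Complex.I‖ * Complex.exp (a * Complex.I) :=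
    (Complex.norm_mul_exp_arg_mul_I _).symm
  have hneg : ((-S : ℝ) : ℂ) + Complex.I = -(starRingEnd ℂ) ((S : ℂ) + Complex.I) := by
    simp [add_comm]
  have hz1 : ((S : ℂ) + Complex.I) ^ 3 * t = R * Complex.exp (((3 * a : ℝ) : ℂ) * Complex.I) := by
    have : Complex.exp (((3 * a : ℝ) : ℂ) * Complex.I) = Complex.exp (a * Complex.I) ^ 3 := by
      rw [← Complex.exp_nat_mul]; congr 1; push_cast; ring
    rw [this, hR]
    push_cast
    rw [mul_assoc, ← mul_pow, ← hpol]
    ring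
  have hz2 : (((-S : ℝ) : ℂ) + Complex.I) ^ 3 * t =
      R * Complex.exp (((Real.pi - 3 * a : ℝ) : ℂ) * Complex.I) := by
    have h1 : (((-S : ℝ) : ℂ) + Complex.I) ^ 3 * t = -(starRingEnd ℂ) (((S : ℂ) + Complex.I) ^ 3 * t) := by
      rw [hneg, map_mul, map_pow, Complex.conj_ofReal]; ring
    rw [h1, hz1, map_mul, ← Complex.exp_conj, Complex.conj_ofReal, map_mul, Complex.conj_ofReal,
      Complex.conj_I]
    have : ((Real.pi - 3 * a : ℝ) : ℂ) * Complex.I =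
      Real.pi * Complex.I + ((3 * a : ℝ) : ℂ) * -Complex.I := by push_cast; ring
    rw [this, Complex.exp_add, Complex.exp_pi_mul_I]
    ring
  have hlog : Complex.log ((S : ℂ) + Complex.I) - Complex.log (((-S : ℝ) : ℂ) + Complex.I) =
      (2 * a - Real.pi) * Complex.I := by
    have harg : Complex.arg (((-S : ℝ) : ℂ) + Complex.I) = -a + Real.pi := by
      rw [hneg, Complex.arg_neg_eq_arg_add_pi_of_im_neg (by simp), Complex.arg_conj, if_neg]
      intro h0
      have := (Complex.arg_eq_pi_iff.1 h0).2
      rw [him] at this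
      exact one_ne_zero this
    have hnorm : ‖((-S : ℝ) : ℂ) + Complex.I‖ = ‖(S : ℂ) + Complex.I‖ := by
      rw [hneg, norm_neg, RCLike.norm_conj]
    unfold Complex.log
    rw [harg, hnorm, ← ha]
    push_cast
    ring
  have hC : ∫ θ in (3 * a)..(Real.pi - 3 * a),
        Complex.I * (Complex.exp (Complex.I * (R * Complex.exp (θ * Complex.I))) - 1) =
      Complex.I * ((∫ θ in (3 * a)..(Real.pi - 3 * a),
        Complex.exp (Complex.I * (R * Complex.exp (θ * Complex.I)))) - (Real.pi - 6 * a)) := by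
    rw [intervalIntegral.integral_const_mul, intervalIntegral.integral_sub
      (Continuous.intervalIntegrable (by fun_prop) _ _)
      (Continuous.intervalIntegrable (by fun_prop) _ _), intervalIntegral.integral_const]
    simp
    ring
  rw [hA, hz1, hz2]
  rw [hC] at hB
  linear_combination hlog + hB / 3

lemma kdv_value (t : ℝ) (ht : 0 < t) : kdvStepSol 1 0 t = 1 := by
  have i1 := (kdv_int_e one_pos 0 t ht).1
  have t1 := intervalIntegral_tendsto_integral i1 tendsto_neg_atTop_atBot tendsto_id
  have hnorm : Tendsto (fun S : ℝ => ‖(S : ℂ) + Complex.I‖) atTop atTop := by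
    refine tendsto_atTop_mono (fun S => ?_) tendsto_id
    have := Complex.re_le_norm ((S : ℂ) + Complex.I)
    simpa using this
  have hRlim : Tendsto (fun S : ℝ => t * ‖(S : ℂ) + Complex.I‖ ^ 3) atTop atTop :=
    ((tendsto_pow_atTop three_ne_zero).comp hnorm).const_mul_atTop ht
  have harg : Tendsto (fun S : ℝ => Complex.arg ((S : ℂ) + Complex.I)) atTop (nhds 0) := by
    have h1 : Tendsto (fun S : ℝ => Real.arcsin (‖(S : ℂ) + Complex.I‖)⁻¹) atTop (nhds 0) := by
      have := (Real.continuous_arcsin.tendsto 0).comp (tendsto_inv_atTop_zero.comp hnorm)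
      simpa [Function.comp_def] using this
    refine h1.congr' ?_
    filter_upwards [eventually_ge_atTop 0] with S hS
    rw [Complex.arg_of_re_nonneg (by simpa using hS)]
    simp
  have hz : Tendsto (fun S : ℝ => ∫ s : ℝ in (-S)..S,
      Complex.exp (Complex.I * ((s : ℂ) + Complex.I) ^ 3 * (t : ℂ)) *
      ((s : ℂ) + Complex.I)⁻¹) atTop (nhds (-(2 * Real.pi * Complex.I / 3))) := by
    rw [tendsto_iff_norm_sub_tendsto_zero]
    have hl := kdv_jordan.comp hRlim
    refine squeeze_zero' (Eventually.of_forall fun S => norm_nonneg _) ?_ hl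
    have hpi := Real.pi_pos
    filter_upwards [harg.eventually_lt_const (show (0 : ℝ) < Real.pi / 6 by linarith)] with S hS
    obtain ⟨R, a, hR, ha, hint⟩ := kdv_finite t S ht
    rw [hint]
    simp only [Function.comp]
    rw [← hR]
    rw [← ha] at hS
    have ha0 : 0 ≤ a := by
      rw [ha, Complex.arg_nonneg_iff]; simp
    rw [sub_sub_cancel_left, norm_neg, norm_mul]
    have hI : ‖Complex.I / 3‖ ≤ 1 := by
      rw [norm_div, Complex.norm_I]; norm_num
    have hle : 3 * a ≤ Real.pi - 3 * a := by linarith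
    have hn : ‖∫ θ in (3 * a)..(Real.pi - 3 * a),
        Complex.exp (Complex.I * (R * Complex.exp (θ * Complex.I)))‖ ≤
        ∫ θ in (0 : ℝ)..Real.pi, Real.exp (-R * Real.sin θ) := by
      refine (intervalIntegral.norm_integral_le_integral_norm hle).trans ?_
      have heq : ∀ θ : ℝ, ‖Complex.exp (Complex.I * (R * Complex.exp (θ * Complex.I)))‖ =
          Real.exp (-R * Real.sin θ) := by
        intro θ
        rw [Complex.norm_exp]
        congr 1
        simp [Complex.exp_ofReal_mul_I_im]
      simp only [heq]
      refine intervalIntegral.integral_mono_interval (by linarith) hle (by linarith)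
        (ae_of_all _ fun θ => (Real.exp_pos _).le) (Continuous.intervalIntegrable (by fun_prop) _ _)
    calc _ ≤ 1 * ∫ θ in (0 : ℝ)..Real.pi, Real.exp (-R * Real.sin θ) := by gcongr
      _ = _ := one_mul _
  have hv := tendsto_nhds_unique t1 (by simpa using hz)
  unfold kdvStepSol
  rw [hv]
  have : (Real.pi : ℂ) ≠ 0 := by exact_mod_cast Real.pi_ne_zero
  field_simp

lemma kdv_x_lim (t : ℝ) (ht : 0 < t) :
      Tendsto (fun x => kdvStepSol 1 x t) (nhdsWithin 0 (Ioi 0)) (nhds (1 : ℂ)) := by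
  have h : ContinuousAt (fun x => kdvStepSol 1 x t) 0 := by
    simp only [kdvSol_eq]
    exact ((kdvJ_dx 0 0 t ht).continuousAt).const_mul _
  have h2 := h.tendsto
  rw [kdv_value t ht] at h2
  exact h2.mono_left nhdsWithin_le_nhds

/-- `v = v_1` is smooth on `Q`, satisfies the linear KdV equation `∂v/∂t = −∂³v/∂x³`
at every point of `Q`, and satisfies `v(0⁺,t) = 1` for every `t > 0` and
`v(x,0⁺) = 0` for every `x > 0`. -/
theorem kdv_step_solution :
    ContDiffOn ℝ (⊤ : ℕ∞) (fun p : ℝ × ℝ => kdvStepSol 1 p.1 p.2) quarterPlane ∧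
    (∀ x t : ℝ, 0 < x → 0 < t →
      deriv (fun s => kdvStepSol 1 x s) t
        = -(iteratedDeriv 3 (fun y => kdvStepSol 1 y t) x)) ∧
    (∀ t : ℝ, 0 < t →
      Tendsto (fun x => kdvStepSol 1 x t) (nhdsWithin 0 (Ioi 0)) (nhds (1 : ℂ))) ∧
    (∀ x : ℝ, 0 < x →
      Tendsto (fun t => kdvStepSol 1 x t) (nhdsWithin 0 (Ioi 0)) (nhds (0 : ℂ))) := by
  exact ⟨kdv_smooth, fun x t _ ht => kdv_pde x t ht, kdv_x_lim, kdv_t_lim⟩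
end

section
/- Let v(x,t) = −(3/(2πi)) ∫_{s∈ℝ} exp( i(s+i)x + i(s+i)³ t ) · (s+i)^{−1} ds on the open quarter-plane Q, and let u = ∂v/∂t. Then u is smooth on Q, satisfies the linear KdV equation ∂u/∂t = −∂³u/∂x³ at every point of Q, satisfies lim_{x→0⁺} u(x,t) = 0 for every t > 0 and lim_{t→0⁺} u(x,t) = 0 for every x > 0, and u is not identically zero on Q. In particular, the homogeneous Dirichlet initial-boundary value problem for the linear KdV equation on the quarter-plane (zero initial datum and zero boundary datum) does not have a unique solution. -/
open MeasureTheory Filter Set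

/-- `u = ∂v/∂t` where `v = v_1`. -/
noncomputable def kdvCounterexample : ℝ → ℝ → ℂ := fun x t =>
  deriv (fun s => kdvStepSol 1 x s) t

/-- `w` is smooth on `Q`, satisfies the linear KdV equation `∂w/∂t = −∂³w/∂x³` at every
point of `Q`, and has vanishing boundary limit (as `x → 0⁺`) and initial limit
(as `t → 0⁺`). -/
def IsHomogeneousKdVSol (w : ℝ → ℝ → ℂ) : Prop :=
  ContDiffOn ℝ (⊤ : ℕ∞) (fun p : ℝ × ℝ => w p.1 p.2) quarterPlane ∧
  (∀ x t : ℝ, 0 < x → 0 < t →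
    deriv (fun s => w x s) t = -(iteratedDeriv 3 (fun y => w y t) x)) ∧
  (∀ t : ℝ, 0 < t → Tendsto (fun x => w x t) (nhdsWithin 0 (Ioi 0)) (nhds (0 : ℂ))) ∧
  (∀ x : ℝ, 0 < x → Tendsto (fun t => w x t) (nhdsWithin 0 (Ioi 0)) (nhds (0 : ℂ)))

noncomputable def kW (k : ℕ) (z : ℂ) (a s : ℝ) : ℂ :=
  Complex.exp (Complex.I * ((s : ℂ) + Complex.I * (a : ℂ)) * z +
        Complex.I * ((s : ℂ) + Complex.I * (a : ℂ)) ^ 3) * ((s : ℂ) + Complex.I * (a : ℂ)) ^ k *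
      ((s : ℂ) + Complex.I * (a : ℂ))⁻¹

lemma kq_im (a s : ℝ) : ((s : ℂ) + Complex.I * (a : ℂ)).im = a := by simp

lemma kq_ne {a : ℝ} (ha : 0 < a) (s : ℝ) : ((s : ℂ) + Complex.I * (a : ℂ)) ≠ 0 := by
  intro h
  have := kq_im a s
  rw [h] at this
  simp at this
  linarith

lemma kq_norm_ge {a : ℝ} (s : ℝ) : a ≤ ‖(s : ℂ) + Complex.I * (a : ℂ)‖ := by
  have := Complex.abs_im_le_norm ((s : ℂ) + Complex.I * (a : ℂ))
  rw [kq_im] at this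
  exact (le_abs_self a).trans this

lemma kq_norm_le {a : ℝ} (ha : 0 < a) (s : ℝ) : ‖(s : ℂ) + Complex.I * (a : ℂ)‖ ≤ |s| + a := by
  refine (norm_add_le _ _).trans ?_
  simp [abs_of_pos ha]

lemma kq_cube_re (a s : ℝ) :
    (Complex.I * ((s : ℂ) + Complex.I * (a : ℂ)) ^ 3).re = a ^ 3 - 3 * a * s ^ 2 := by
  simp [pow_succ]; ring

lemma kW_bound (k : ℕ) (R α β : ℝ) (hR : 0 ≤ R) (hα : 0 < α) : ∃ K : ℝ, 0 ≤ K ∧ ∀ (z : ℂ) (a s : ℝ),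
    ‖z‖ ≤ R → α ≤ a → a ≤ β → ‖kW k z a s‖ ≤ K * Real.exp (-α * s ^ 2) := by
  refine ⟨k.factorial * α⁻¹ * Real.exp ((R+1)*β + β^3 + (R+1)^2/(8*α)), by positivity, ?_⟩
  intro z a s hz ha hb
  have ha0 : 0 < a := hα.trans_le ha
  set q := (s : ℂ) + Complex.I * (a : ℂ) with hq
  have hn := kq_norm_le ha0 s
  have hge := kq_norm_ge (a := a) s
  rw [← hq] at hn hge
  have h1 : ‖Complex.exp (Complex.I * q * z + Complex.I * q ^ 3)‖ ≤
      Real.exp (R * (|s| + β) + (β^3 - 3 * α * s^2)) := by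
    rw [Complex.norm_exp, Real.exp_le_exp, Complex.add_re, kq_cube_re]
    have e1 : (Complex.I * q * z).re ≤ R * (|s| + β) := by
      refine (Complex.re_le_norm _).trans ?_
      rw [norm_mul, norm_mul, Complex.norm_I, one_mul, mul_comm]
      have : 0 ≤ |s| := abs_nonneg s
      gcongr
      linarith
    have e2 : a^3 ≤ β^3 := by gcongr
    have e3 : α * s^2 ≤ a * s^2 := by gcongr
    linarith
  have h2 : ‖q ^ k‖ ≤ k.factorial * Real.exp (|s| + β) := by
    rw [norm_pow]
    have := Real.pow_div_factorial_le_exp ‖q‖ (norm_nonneg _) k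
    rw [div_le_iff₀ (by positivity)] at this
    refine this.trans ?_
    rw [mul_comm]
    gcongr
    linarith
  have h3 : ‖q⁻¹‖ ≤ α⁻¹ := by
    rw [norm_inv]
    gcongr
    linarith
  unfold kW
  rw [norm_mul, norm_mul, ← hq]
  calc _ ≤ Real.exp (R * (|s| + β) + (β^3 - 3 * α * s^2)) * (k.factorial * Real.exp (|s| + β)) * α⁻¹ := by
        gcongr
    _ = k.factorial * α⁻¹ * Real.exp (R * (|s| + β) + (β^3 - 3 * α * s^2) + (|s| + β)) := by
        rw [Real.exp_add _ (|s| + β)]; ring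
    _ ≤ k.factorial * α⁻¹ * Real.exp (((R+1)*β + β^3 + (R+1)^2/(8*α)) + (-α * s^2)) := by
        refine mul_le_mul_of_nonneg_left (Real.exp_le_exp.2 ?_) (by positivity)
        have : (R+1) * |s| ≤ 2 * α * s^2 + (R+1)^2/(8*α) := by
          have h := sq_nonneg (4 * α * |s| - (R+1))
          rw [← sq_abs s]
          have h8 : (R+1)^2/(8*α) * (8 * α) = (R+1)^2 := by field_simp
          by_contra hc
          push Not at hc
          have := mul_lt_mul_of_pos_right hc (show 0 < 8 * α by positivity)
          nlinarith
        nlinarith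
    _ = _ := by rw [Real.exp_add]; ring

lemma kW_cont (k : ℕ) (z : ℂ) {a : ℝ} (ha : 0 < a) : Continuous (kW k z a) := by
  unfold kW
  have := kq_ne ha
  fun_prop (disch := assumption)

lemma kW_int (k : ℕ) (z : ℂ) {a : ℝ} (ha : 0 < a) : Integrable (kW k z a) := by
  obtain ⟨K, hK, h⟩ := kW_bound k ‖z‖ a a (norm_nonneg _) ha
  refine ((integrable_exp_neg_mul_sq ha).const_mul K).mono' (kW_cont k z ha).aestronglyMeasurable ?_
  exact Eventually.of_forall fun s => h z a s le_rfl le_rfl le_rfl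

noncomputable def kP (k : ℕ) (z : ℂ) : ℂ := ∫ s, kW k z 1 s

lemma kP_deriv (k : ℕ) (z : ℂ) : HasDerivAt (kP k) (Complex.I * kP (k+1) z) z := by
  obtain ⟨K, hK, h⟩ := kW_bound (k+1) (‖z‖+1) 1 1 (by positivity) one_pos
  have := hasDerivAt_integral_of_dominated_loc_of_deriv_le (μ := volume) (F := fun z s => kW k z 1 s)
    (F' := fun z s => Complex.I * kW (k+1) z 1 s) (x₀ := z) (s := Metric.ball z 1)
    (bound := fun s => K * Real.exp (-1 * s ^ 2))
    (Metric.ball_mem_nhds z one_pos)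
    (Eventually.of_forall fun w => (kW_cont k w one_pos).aestronglyMeasurable)
    (kW_int k z one_pos) ((kW_int (k+1) z one_pos).const_mul _).aestronglyMeasurable
    (Eventually.of_forall fun s w hw => by
      rw [norm_mul, Complex.norm_I, one_mul]
      refine h w 1 s ?_ le_rfl le_rfl
      have h1 : ‖w - z‖ < 1 := by simpa [dist_eq_norm] using hw
      have h2 := norm_sub_norm_le w z
      linarith)
    ((integrable_exp_neg_mul_sq one_pos).const_mul K)
    (Eventually.of_forall fun s w hw => by
      unfold kW
      set q := (s : ℂ) + Complex.I * ((1:ℝ) : ℂ)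
      have e : HasDerivAt (fun w : ℂ => Complex.I * q * w + Complex.I * q ^ 3) (Complex.I * q) w := by
        simpa using ((hasDerivAt_id w).const_mul (Complex.I * q)).add_const (Complex.I * q ^ 3)
      have := ((e.cexp).mul_const (q ^ k)).mul_const (q⁻¹)
      refine this.congr_deriv ?_
      ring)
  have h2 := this.2
  rw [integral_const_mul] at h2
  exact h2

lemma kE_hasDeriv (z μ : ℂ) : HasDerivAt (fun μ => Complex.exp (Complex.I * μ * z + Complex.I * μ ^ 3))
    (Complex.exp (Complex.I * μ * z + Complex.I * μ ^ 3) * (Complex.I * z + 3 * Complex.I * μ^2)) μ := by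
  have e : HasDerivAt (fun μ : ℂ => Complex.I * μ * z + Complex.I * μ ^ 3) (Complex.I * z + 3 * Complex.I * μ^2) μ := by
    have := (((hasDerivAt_id μ).const_mul Complex.I).mul_const z).add (((hasDerivAt_id μ).pow 3).const_mul Complex.I)
    refine this.congr_deriv ?_
    simp; ring
  exact e.cexp

lemma kq_deriv_s (a s : ℝ) : HasDerivAt (fun s : ℝ => (s : ℂ) + Complex.I * (a : ℂ)) 1 s := by
  simpa using (hasDerivAt_id s).ofReal_comp.add_const (Complex.I * (a : ℂ))

lemma kq_deriv_a (a s : ℝ) : HasDerivAt (fun a : ℝ => (s : ℂ) + Complex.I * (a : ℂ)) Complex.I a := by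
  simpa using ((hasDerivAt_id a).ofReal_comp.const_mul Complex.I).const_add (s : ℂ)

lemma kP_ode (z : ℂ) : z * kP 1 z + 3 * kP 3 z = 0 := by
  have h := integral_eq_zero_of_hasDerivAt_of_integrable (f := kW 1 z 1)
    (f' := fun s => Complex.I * z * kW 1 z 1 s + 3 * Complex.I * kW 3 z 1 s)
    (fun s => by
      have h1 := (kE_hasDeriv z ((s : ℂ) + Complex.I * ((1:ℝ) : ℂ))).scomp s (kq_deriv_s 1 s)
      have hf : kW 1 z 1 = (fun μ => Complex.exp (Complex.I * μ * z + Complex.I * μ ^ 3)) ∘ fun s : ℝ => (s : ℂ) + Complex.I * ((1:ℝ) : ℂ) := by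
        funext s
        have := kq_ne one_pos s
        simp only [kW, Function.comp]
        field_simp
      rw [hf]
      refine h1.congr_deriv ?_
      have := kq_ne one_pos s
      simp only [kW, Function.comp, one_smul]
      field_simp)
    (((kW_int 1 z one_pos).const_mul _).add ((kW_int 3 z one_pos).const_mul _))
    (kW_int 1 z one_pos)
  rw [integral_add ((kW_int 1 z one_pos).const_mul _) ((kW_int 3 z one_pos).const_mul _),
    integral_const_mul, integral_const_mul] at h
  have h2 : Complex.I * (z * kP 1 z + 3 * kP 3 z) = 0 := by
    rw [← h]; unfold kP; ring
  simpa using h2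

noncomputable def kD (z : ℂ) (a s : ℝ) : ℂ :=
  Complex.I * z * kW 0 z a s + 3 * Complex.I * kW 2 z a s - kW 0 z a s * ((s : ℂ) + Complex.I * (a : ℂ))⁻¹

lemma kD_deriv (z : ℂ) (μ : ℂ) (h : μ ≠ 0) :
    HasDerivAt (fun μ => Complex.exp (Complex.I * μ * z + Complex.I * μ ^ 3) * μ ^ 0 * μ⁻¹)
    (Complex.I * z * (Complex.exp (Complex.I * μ * z + Complex.I * μ ^ 3) * μ ^ 0 * μ⁻¹)
     + 3 * Complex.I * (Complex.exp (Complex.I * μ * z + Complex.I * μ ^ 3) * μ ^ 2 * μ⁻¹)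
     - (Complex.exp (Complex.I * μ * z + Complex.I * μ ^ 3) * μ ^ 0 * μ⁻¹) * μ⁻¹) μ := by
  simp only [pow_zero, mul_one]
  have := (kE_hasDeriv z μ).mul (hasDerivAt_inv h)
  refine this.congr_deriv ?_
  field_simp
  ring

lemma kD_bound (z : ℂ) (α β : ℝ) (hα : 0 < α) : ∃ K : ℝ, ∀ (a s : ℝ),
    α ≤ a → a ≤ β → ‖kD z a s‖ ≤ K * Real.exp (-α * s ^ 2) := by
  obtain ⟨K0, hK0, h0⟩ := kW_bound 0 ‖z‖ α β (norm_nonneg _) hα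
  obtain ⟨K2, hK2, h2⟩ := kW_bound 2 ‖z‖ α β (norm_nonneg _) hα
  refine ⟨‖z‖ * K0 + 3 * K2 + K0 * α⁻¹, fun a s ha hb => ?_⟩
  have hge := kq_norm_ge (a := a) s
  have h3 : ‖((s : ℂ) + Complex.I * (a : ℂ))⁻¹‖ ≤ α⁻¹ := by
    rw [norm_inv]
    gcongr
    linarith
  unfold kD
  refine (norm_sub_le _ _).trans ?_
  refine (add_le_add (norm_add_le _ _) le_rfl).trans ?_
  simp only [norm_mul, Complex.norm_I, one_mul, mul_one]
  have e0 := h0 z a s le_rfl ha hb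
  have e2 := h2 z a s le_rfl ha hb
  have : ‖(3:ℂ)‖ = 3 := by simp
  rw [this]
  calc _ ≤ ‖z‖ * (K0 * Real.exp (-α * s ^ 2)) + 3 * (K2 * Real.exp (-α * s ^ 2)) + (K0 * Real.exp (-α * s ^ 2)) * α⁻¹ := by gcongr
    _ = _ := by ring

lemma kD_cont (z : ℂ) {a : ℝ} (ha : 0 < a) : Continuous (kD z a) := by
  unfold kD
  have := kq_ne ha
  have h0 := kW_cont 0 z ha
  have h2 := kW_cont 2 z ha
  fun_prop (disch := assumption)

lemma kD_int (z : ℂ) {a : ℝ} (ha : 0 < a) : Integrable (kD z a) := by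
  obtain ⟨K, h⟩ := kD_bound z a a ha
  refine ((integrable_exp_neg_mul_sq ha).const_mul K).mono' (kD_cont z ha).aestronglyMeasurable ?_
  exact Eventually.of_forall fun s => h a s le_rfl le_rfl

lemma kD_zero (z : ℂ) {a : ℝ} (ha : 0 < a) : ∫ s, kD z a s = 0 :=
  integral_eq_zero_of_hasDerivAt_of_integrable (f := kW 0 z a)
    (fun s => by
      have := (kD_deriv z _ (kq_ne ha s)).scomp s (kq_deriv_s a s)
      rw [one_smul] at this
      exact this) (kD_int z ha) (kW_int 0 z ha)

lemma kJ_deriv (z : ℂ) {a : ℝ} (ha : 0 < a) : HasDerivAt (fun a => ∫ s, kW 0 z a s) 0 a := by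
  obtain ⟨K, h⟩ := kD_bound z (a/2) (2*a) (by positivity)
  have hpos : ∀ b ∈ Ioo (a/2) (2*a), 0 < b := fun b hb => by linarith [hb.1]
  have hmem : Ioo (a/2) (2*a) ∈ nhds a := Ioo_mem_nhds (by linarith) (by linarith)
  have := hasDerivAt_integral_of_dominated_loc_of_deriv_le (μ := volume) (F := fun a s => kW 0 z a s)
    (F' := fun a s => Complex.I * kD z a s) (x₀ := a) (s := Ioo (a/2) (2*a))
    (bound := fun s => K * Real.exp (-(a/2) * s ^ 2))
    hmem
    (by filter_upwards [hmem] with b hb using (kW_cont 0 z (hpos b hb)).aestronglyMeasurable)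
    (kW_int 0 z ha) ((kD_int z ha).const_mul _).aestronglyMeasurable
    (Eventually.of_forall fun s b hb => by
      rw [norm_mul, Complex.norm_I, one_mul]
      exact h b s hb.1.le hb.2.le)
    ((integrable_exp_neg_mul_sq (by positivity)).const_mul K)
    (Eventually.of_forall fun s b hb => by
      have := (kD_deriv z _ (kq_ne (hpos b hb) s)).scomp b (kq_deriv_a b s)
      exact this)
  have h2 := this.2
  rw [integral_const_mul, kD_zero z ha, mul_zero] at h2
  exact h2

lemma kJ_const (z : ℂ) {a : ℝ} (ha : 0 < a) : ∫ s, kW 0 z a s = kP 0 z := by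
  have := isOpen_Ioi.is_const_of_deriv_eq_zero (s := Ioi (0:ℝ)) (f := fun a => ∫ s, kW 0 z a s)
    isPreconnected_Ioi (fun b hb => (kJ_deriv z hb).differentiableAt.differentiableWithinAt)
    (fun b hb => (kJ_deriv z hb).deriv) (x := a) (y := 1) ha (Set.mem_Ioi.2 one_pos)
  exact this

/-- self-similarity -/
lemma kdv_selfsim (x : ℝ) {t : ℝ} (ht : 0 < t) :
    kdvStepSol 1 x t = -(3 / (2 * (Real.pi : ℂ) * Complex.I)) * kP 0 ((x * t ^ (-(1/3) : ℝ) : ℝ) : ℂ) := by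
  unfold kdvStepSol
  congr 1
  set c : ℝ := t ^ ((1/3 : ℝ)) with hc
  have hc0 : 0 < c := Real.rpow_pos_of_pos ht _
  have hc3 : c ^ 3 = t := by
    rw [hc, ← Real.rpow_natCast, ← Real.rpow_mul ht.le]; norm_num
  have hci : t ^ (-(1/3) : ℝ) = c⁻¹ := by rw [Real.rpow_neg ht.le]
  rw [hci, ← kJ_const _ hc0]
  have h := Measure.integral_comp_mul_left (kW 0 ((x * c⁻¹ : ℝ) : ℂ) c) c
  have hcC : (c : ℂ) ≠ 0 := by exact_mod_cast hc0.ne'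
  have h2 : ∫ s, kW 0 ((x * c⁻¹ : ℝ) : ℂ) c s = (c : ℂ) * ∫ s, kW 0 ((x * c⁻¹ : ℝ) : ℂ) c (c * s) := by
    rw [h, abs_of_pos (inv_pos.2 hc0), Complex.real_smul]
    push_cast
    field_simp
  rw [h2, ← integral_const_mul]
  congr 1
  funext s
  unfold kW
  rw [← hc3]
  have hq := kq_ne one_pos s
  have e : (((c * s : ℝ)) : ℂ) + Complex.I * (c : ℂ) = c * ((s : ℂ) + Complex.I * ((1:ℝ) : ℂ)) := by
    push_cast; ring
  rw [e]
  set q := (s : ℂ) + Complex.I * ((1:ℝ) : ℂ)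
  have e2 : Complex.I * (c * q) * ((x * c⁻¹ : ℝ) : ℂ) + Complex.I * (c * q) ^ 3 =
      Complex.I * q * x + Complex.I * q ^ 3 * ((c^3 : ℝ) : ℂ) := by
    push_cast; field_simp
  rw [e2]
  field_simp

lemma kP_diff (k : ℕ) : Differentiable ℂ (kP k) := fun z => (kP_deriv k z).differentiableAt

lemma kP_comp (k : ℕ) {f : ℝ → ℝ} {f' t : ℝ} (hf : HasDerivAt f f' t) :
    HasDerivAt (fun s => kP k ((f s : ℝ) : ℂ)) ((f' : ℂ) * (Complex.I * kP (k+1) ((f t : ℝ) : ℂ))) t := by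
  have := (kP_deriv k ((f t : ℝ) : ℂ)).scomp t hf.ofReal_comp
  exact this

lemma k_rpow {t : ℝ} (ht : 0 < t) (n : ℕ) (p : ℝ) (hp : p = -(1/3) * n) :
    t ^ p = (t ^ (-(1/3) : ℝ)) ^ n := by
  rw [← Real.rpow_natCast, ← Real.rpow_mul ht.le, hp]

lemma kxi_deriv (x : ℝ) {t : ℝ} (ht : 0 < t) :
    HasDerivAt (fun s : ℝ => x * s ^ (-(1/3) : ℝ)) (x * (-(1/3) * (t ^ (-(1/3) : ℝ)) ^ 4)) t := by
  have := (Real.hasDerivAt_rpow_const (x := t) (p := -(1/3)) (Or.inl ht.ne')).const_mul x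
  refine this.congr_deriv ?_
  rw [k_rpow ht 4 (-(1/3) - 1) (by norm_num)]

lemma ku_eq (x : ℝ) {t : ℝ} (ht : 0 < t) : kdvCounterexample x t =
    (1 / (2 * (Real.pi : ℂ))) * ((x * t ^ (-(4/3) : ℝ) : ℝ) : ℂ) * kP 1 ((x * t ^ (-(1/3) : ℝ) : ℝ) : ℂ) := by
  unfold kdvCounterexample
  have h : (fun s => kdvStepSol 1 x s) =ᶠ[nhds t] fun s =>
      -(3 / (2 * (Real.pi : ℂ) * Complex.I)) * kP 0 ((x * s ^ (-(1/3) : ℝ) : ℝ) : ℂ) := by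
    filter_upwards [Ioi_mem_nhds ht] with s hs using kdv_selfsim x hs
  rw [h.deriv_eq, ((kP_comp 0 (kxi_deriv x ht)).const_mul _).deriv, k_rpow ht 4 (-(4/3)) (by norm_num)]
  have hpi : (Real.pi : ℂ) ≠ 0 := by exact_mod_cast Real.pi_ne_zero
  push_cast
  field_simp

lemma ku_t (x : ℝ) {t : ℝ} (ht : 0 < t) : deriv (fun s => kdvCounterexample x s) t =
    (1 / (2 * (Real.pi : ℂ))) * (-(4/3) * x * (t ^ (-(1/3) : ℝ) : ℝ) ^ 7 * kP 1 ((x * t ^ (-(1/3) : ℝ) : ℝ) : ℂ)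
      - (1/3) * x ^ 2 * (t ^ (-(1/3) : ℝ) : ℝ) ^ 8 * Complex.I * kP 2 ((x * t ^ (-(1/3) : ℝ) : ℝ) : ℂ)) := by
  have h : (fun s => kdvCounterexample x s) =ᶠ[nhds t] fun s =>
      (1 / (2 * (Real.pi : ℂ))) * (((x * s ^ (-(4/3) : ℝ) : ℝ) : ℂ) * kP 1 ((x * s ^ (-(1/3) : ℝ) : ℝ) : ℂ)) := by
    filter_upwards [Ioi_mem_nhds ht] with s hs
    rw [ku_eq x hs, mul_assoc]
  have h4 : HasDerivAt (fun s : ℝ => x * s ^ (-(4/3) : ℝ)) (x * (-(4/3) * (t ^ (-(1/3) : ℝ)) ^ 7)) t := by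
    have := (Real.hasDerivAt_rpow_const (x := t) (p := -(4/3)) (Or.inl ht.ne')).const_mul x
    refine this.congr_deriv ?_
    rw [k_rpow ht 7 (-(4/3) - 1) (by norm_num)]
  rw [h.deriv_eq]
  refine ((h4.ofReal_comp.mul (kP_comp 1 (kxi_deriv x ht))).const_mul _).deriv.trans ?_
  rw [k_rpow ht 4 (-(4/3)) (by norm_num)]
  push_cast
  ring

lemma kP3 (z : ℂ) : kP 3 z = -(z * kP 1 z) / 3 := by
  linear_combination (1/3) * kP_ode z

lemma ku_x (x : ℝ) {t : ℝ} (ht : 0 < t) : iteratedDeriv 3 (fun y => kdvCounterexample y t) x =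
    (1 / (2 * (Real.pi : ℂ))) * ((4/3) * x * (t ^ (-(1/3) : ℝ) : ℝ) ^ 7 * kP 1 ((x * t ^ (-(1/3) : ℝ) : ℝ) : ℂ)
      + (1/3) * x ^ 2 * (t ^ (-(1/3) : ℝ) : ℝ) ^ 8 * Complex.I * kP 2 ((x * t ^ (-(1/3) : ℝ) : ℝ) : ℂ)) := by
  set b : ℝ := t ^ (-(1/3) : ℝ) with hb
  set c : ℂ := (1 / (2 * (Real.pi : ℂ))) with hc
  have h0 : (fun y => kdvCounterexample y t) = fun y : ℝ =>
      c * (b:ℂ)^4 * ((y:ℂ) * kP 1 ((y * b : ℝ) : ℂ)) := by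
    funext y
    rw [ku_eq y ht, k_rpow ht 4 (-(4/3)) (by norm_num), ← hb, ← hc]
    push_cast; ring
  have hy : ∀ y : ℝ, HasDerivAt (fun y : ℝ => (y : ℂ)) 1 y := fun y => by
    simpa using (hasDerivAt_id y).ofReal_comp
  have hm : ∀ y : ℝ, HasDerivAt (fun y : ℝ => y * b) b y := fun y => by
    simpa using (hasDerivAt_id y).mul_const b
  have d1 : ∀ y : ℝ, HasDerivAt (fun y : ℝ => c * (b:ℂ)^4 * ((y:ℂ) * kP 1 ((y * b : ℝ) : ℂ)))
      (c * (b:ℂ)^4 * (kP 1 ((y * b : ℝ) : ℂ) + (b * Complex.I) * ((y:ℂ) * kP 2 ((y * b : ℝ) : ℂ)))) y := fun y => by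
    refine (((hy y).mul (kP_comp 1 (hm y))).const_mul _).congr_deriv ?_
    ring
  have d2 : ∀ y : ℝ, HasDerivAt (fun y : ℝ => c * (b:ℂ)^4 * (kP 1 ((y * b : ℝ) : ℂ) + (b * Complex.I) * ((y:ℂ) * kP 2 ((y * b : ℝ) : ℂ))))
      (c * (b:ℂ)^4 * ((2 * b * Complex.I) * kP 2 ((y * b : ℝ) : ℂ) + ((b:ℂ) ^ 3 / 3) * ((y:ℂ) ^ 2 * kP 1 ((y * b : ℝ) : ℂ)))) y := fun y => by
    refine (((kP_comp 1 (hm y)).add (((hy y).mul (kP_comp 2 (hm y))).const_mul _)).const_mul _).congr_deriv ?_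
    rw [kP3]
    push_cast
    linear_combination (-1/3 * c * b^7 * y^2 * kP 1 (y * b)) * Complex.I_sq
  have d3 : ∀ y : ℝ, HasDerivAt (fun y : ℝ => c * (b:ℂ)^4 * ((2 * b * Complex.I) * kP 2 ((y * b : ℝ) : ℂ) + ((b:ℂ) ^ 3 / 3) * ((y:ℂ) ^ 2 * kP 1 ((y * b : ℝ) : ℂ))))
      (c * ((4/3) * y * (b:ℂ) ^ 7 * kP 1 ((y * b : ℝ) : ℂ)
      + (1/3) * y ^ 2 * (b:ℂ) ^ 8 * Complex.I * kP 2 ((y * b : ℝ) : ℂ))) y := fun y => by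
    refine ((((kP_comp 2 (hm y)).const_mul _).add ((((hy y).pow 2).mul (kP_comp 1 (hm y))).const_mul _)).const_mul _).congr_deriv ?_
    rw [kP3]
    simp only [Pi.pow_apply]
    push_cast
    linear_combination (-2/3 * c * b^7 * y * kP 1 (y * b)) * Complex.I_sq
  rw [h0, iteratedDeriv_succ, iteratedDeriv_succ, iteratedDeriv_one, funext fun y => (d1 y).deriv,
    funext fun y => (d2 y).deriv, (d3 x).deriv]

lemma ku_smooth : ContDiffOn ℝ (⊤ : ℕ∞) (fun p : ℝ × ℝ => kdvCounterexample p.1 p.2) quarterPlane := by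
  have hP : ContDiff ℝ (⊤ : ℕ∞) (kP 1) := (kP_diff 1).contDiff.restrict_scalars ℝ
  have hr : ∀ q : ℝ, ContDiffOn ℝ (⊤ : ℕ∞) (fun p : ℝ × ℝ => ((p.1 * p.2 ^ q : ℝ) : ℂ)) quarterPlane := by
    intro q
    refine Complex.ofRealCLM.contDiff.comp_contDiffOn ?_
    refine contDiff_fst.contDiffOn.mul ?_
    intro p hp
    exact (contDiff_snd.contDiffAt.rpow_const_of_ne hp.2.ne').contDiffWithinAt
  have : ContDiffOn ℝ (⊤ : ℕ∞) (fun p : ℝ × ℝ => (1 / (2 * (Real.pi : ℂ))) *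
      ((p.1 * p.2 ^ (-(4/3) : ℝ) : ℝ) : ℂ) * kP 1 ((p.1 * p.2 ^ (-(1/3) : ℝ) : ℝ) : ℂ)) quarterPlane :=
    (contDiffOn_const.mul (hr _)).mul (hP.comp_contDiffOn (hr _))
  exact this.congr fun p hp => ku_eq p.1 hp.2

lemma ku_x0 (t : ℝ) (ht : 0 < t) :
    Tendsto (fun x => kdvCounterexample x t) (nhdsWithin 0 (Ioi 0)) (nhds (0 : ℂ)) := by
  rw [funext fun x => ku_eq x ht]
  have hc : Continuous (kP 1) := (kP_diff 1).continuous
  have : Continuous (fun x : ℝ => (1 / (2 * (Real.pi : ℂ))) * ((x * t ^ (-(4/3) : ℝ) : ℝ) : ℂ) * kP 1 ((x * t ^ (-(1/3) : ℝ) : ℝ) : ℂ)) := by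
    fun_prop
  have h := (this.tendsto 0).mono_left (nhdsWithin_le_nhds (s := Ioi (0:ℝ)))
  simpa using h

lemma kP_decay : ∃ K : ℝ, ∀ r : ℝ, ‖kP 1 (r : ℂ)‖ ≤ K * Real.exp (-r) := by
  refine ⟨∫ s, ‖kW 1 0 1 s‖, fun r => ?_⟩
  unfold kP
  refine (norm_integral_le_integral_norm _).trans ?_
  rw [← integral_mul_const]
  refine le_of_eq (congrArg _ (funext fun s => ?_))
  unfold kW
  rw [Complex.exp_add, Complex.exp_add, norm_mul, norm_mul, norm_mul, norm_mul, norm_mul, norm_mul,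
    Complex.norm_exp (Complex.I * ((s : ℂ) + Complex.I * ((1:ℝ) : ℂ)) * r)]
  have : (Complex.I * ((s : ℂ) + Complex.I * ((1:ℝ) : ℂ)) * r).re = -r := by simp
  rw [this]
  simp
  ring

lemma ku_t0 (x : ℝ) (hx : 0 < x) :
    Tendsto (fun t => kdvCounterexample x t) (nhdsWithin 0 (Ioi 0)) (nhds (0 : ℂ)) := by
  obtain ⟨K, hK⟩ := kP_decay
  have h1 : Tendsto (fun t : ℝ => x * t ^ (-(1/3) : ℝ)) (nhdsWithin 0 (Ioi 0)) atTop :=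
    (tendsto_rpow_neg_nhdsGT_zero (by norm_num)).const_mul_atTop hx
  have h2 := ((Real.tendsto_pow_mul_exp_neg_atTop_nhds_zero 4).comp h1).const_mul
    (‖(1 / (2 * (Real.pi : ℂ)))‖ * (x ^ 3)⁻¹ * K)
  rw [mul_zero] at h2
  refine squeeze_zero_norm' ?_ h2
  filter_upwards [self_mem_nhdsWithin] with t ht
  have ht : 0 < t := ht
  rw [ku_eq x ht, norm_mul, norm_mul, k_rpow ht 4 (-(4/3)) (by norm_num)]
  have hb : 0 < t ^ (-(1/3) : ℝ) := Real.rpow_pos_of_pos ht _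
  set b := t ^ (-(1/3) : ℝ)
  have e : ‖((x * b ^ 4 : ℝ) : ℂ)‖ = x * b ^ 4 := by
    rw [Complex.norm_real, Real.norm_of_nonneg (by positivity)]
  rw [e]
  calc _ ≤ ‖(1 / (2 * (Real.pi : ℂ)))‖ * (x * b ^ 4) * (K * Real.exp (-(x * b))) := by
        gcongr
        exact hK _
    _ = _ := by
        simp only [Function.comp]
        rw [show t ^ (-(1/3) : ℝ) = b from rfl]
        field_simp

lemma kP_ne : ∃ r : ℝ, 0 < r ∧ kP 1 (r : ℂ) ≠ 0 := by
  by_contra! hcon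
  have hz : kP 1 = 0 := by
    refine AnalyticOnNhd.eq_of_frequently_eq (z₀ := 1)
      (fun z _ => (kP_diff 1).analyticAt z) (fun z _ => analyticAt_const) ?_
    have ht : Tendsto (fun r : ℝ => (r : ℂ)) (nhdsWithin 1 (Ioi 1)) (nhdsWithin 1 {1}ᶜ) := by
      refine tendsto_nhdsWithin_iff.2 ⟨?_, ?_⟩
      · exact (Complex.continuous_ofReal.tendsto' 1 1 (by simp)).mono_left nhdsWithin_le_nhds
      · filter_upwards [self_mem_nhdsWithin] with r hr
        have : (1:ℝ) < r := hr
        simp only [mem_compl_iff, mem_singleton_iff]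
        exact_mod_cast this.ne'
    refine ht.frequently (Eventually.frequently ?_)
    filter_upwards [self_mem_nhdsWithin] with r hr
    exact hcon r (zero_lt_one.trans hr)
  have hF : FourierTransform.fourier (kW 1 0 1) = (0 : ℝ → ℂ) := by
    funext w
    rw [Real.fourier_real_eq_integral_exp_smul]
    have : ∀ v : ℝ, Complex.exp (((-2 * Real.pi * v * w : ℝ) : ℂ) * Complex.I) • kW 1 0 1 v =
        Complex.exp (-2 * Real.pi * w) * kW 1 (-2 * Real.pi * w) 1 v := by
      intro v
      unfold kW
      rw [smul_eq_mul, ← mul_assoc, ← mul_assoc, ← mul_assoc, ← mul_assoc, ← Complex.exp_add, ← Complex.exp_add]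
      congr 3
      push_cast
      linear_combination (2 * Real.pi * w) * Complex.I_sq
    simp_rw [this]
    rw [integral_const_mul]
    change _ * kP 1 _ = 0
    rw [hz]; simp
  have hi := (kW_cont 1 0 one_pos).fourierInv_fourier_eq (kW_int 1 0 one_pos)
    (by rw [hF]; exact integrable_zero _ _ _)
  rw [hF] at hi
  have h0 := congrFun hi 0
  have : FourierTransformInv.fourierInv (0 : ℝ → ℂ) (0:ℝ) = 0 := by
    rw [Real.fourierInv_eq']
    simp
  rw [this] at h0
  have hne : kW 1 0 1 0 ≠ 0 := by
    unfold kW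
    simp
  exact hne h0.symm

lemma k_zero_sol : IsHomogeneousKdVSol (fun _ _ => 0) := by
  refine ⟨contDiffOn_const, fun x t _ _ => ?_, fun _ _ => tendsto_const_nhds, fun _ _ => tendsto_const_nhds⟩
  simp

theorem kdv_nonuniqueness :
    IsHomogeneousKdVSol kdvCounterexample ∧
    (∃ x t : ℝ, 0 < x ∧ 0 < t ∧ kdvCounterexample x t ≠ 0) ∧
    (∃ w₁ w₂ : ℝ → ℝ → ℂ, IsHomogeneousKdVSol w₁ ∧ IsHomogeneousKdVSol w₂ ∧
      ∃ x t : ℝ, 0 < x ∧ 0 < t ∧ w₁ x t ≠ w₂ x t) := by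
  have hs : IsHomogeneousKdVSol kdvCounterexample := by
    refine ⟨ku_smooth, fun x t _ ht => ?_, ku_x0, ku_t0⟩
    rw [ku_t x ht, ku_x x ht]
    ring
  have hn : ∃ x t : ℝ, 0 < x ∧ 0 < t ∧ kdvCounterexample x t ≠ 0 := by
    obtain ⟨r, hr, h⟩ := kP_ne
    refine ⟨r, 1, hr, one_pos, ?_⟩
    rw [ku_eq r one_pos]
    simp [h, hr.ne', Real.pi_ne_zero]
  exact ⟨hs, hn, kdvCounterexample, fun _ _ => 0, hs, k_zero_sol, hn⟩
end
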